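/- Suppose C(x,y) = y₁·F(x₁,…,x_r) + Σ_{j=1}^{m} x_j q_j(y) + R(y), where F is a nonsingular positive definite integral quadratic form in r variables with 5 ≤ r ≤ m, and suppose that for some 1 ≤ i ≤ r the polynomial y₁ does not divide q_i(y) in ℤ[y₁,…,y_h]. Then there exist c > 0 and B₀ such that N(B) ≥ c · B^{n−h−2+(h−1)/2} for all B ≥ B₀. -/

import Mathlib

open MvPolynomial


namespace CM

/-- Quadratic Gauss sum. -/
noncomputable def gs (q : ℕ) [NeZero q] (α γ : ZMod q) : ℂ :=
  ∑ x : ZMod q, ZMod.stdAddChar (α * x ^ 2 + γ * x)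

lemma norm_char (q : ℕ) [NeZero q] (x : ZMod q) : ‖(ZMod.stdAddChar x : ℂ)‖ = 1 := by
  rw [ZMod.stdAddChar_apply]; exact Circle.norm_coe _

lemma conj_char (q : ℕ) [NeZero q] (x : ZMod q) :
    (starRingEnd ℂ) (ZMod.stdAddChar x : ℂ) = ZMod.stdAddChar (-x) := by
  rw [ZMod.stdAddChar_apply, ZMod.stdAddChar_apply, AddChar.map_neg_eq_inv, Circle.coe_inv_eq_conj]

lemma gs_norm_sq (q : ℕ) [NeZero q] (α γ : ZMod q) :
    ‖gs q α γ‖ ^ 2 ≤ q * (Finset.univ.filter (fun h : ZMod q => 2 * α * h = 0)).card := by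
  have h1 : ((‖gs q α γ‖ ^ 2 : ℝ) : ℂ) = ∑ h : ZMod q, ZMod.stdAddChar (α * h ^ 2 + γ * h) *
      (if 2 * α * h = 0 then (q : ℂ) else 0) := by
    have : ((‖gs q α γ‖ ^ 2 : ℝ) : ℂ) = gs q α γ * (starRingEnd ℂ) (gs q α γ) := by
      rw [Complex.mul_conj, Complex.normSq_eq_norm_sq]
    rw [this]
    unfold gs
    rw [map_sum, Finset.sum_mul_sum, Finset.sum_comm]
    simp_rw [conj_char, ← AddChar.map_add_eq_mul]
    have h2 : ∀ y : ZMod q, ∑ x : ZMod q, (ZMod.stdAddChar (α * x ^ 2 + γ * x + -(α * y ^ 2 + γ * y)) : ℂ)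
        = ∑ h : ZMod q, ZMod.stdAddChar (α * h ^ 2 + γ * h) * ZMod.stdAddChar (y * (2 * α * h)) := by
      intro y
      rw [← Equiv.sum_comp (Equiv.addRight y)]
      refine Finset.sum_congr rfl fun h _ => ?_
      rw [← AddChar.map_add_eq_mul]
      congr 1
      simp only [Equiv.coe_addRight]
      ring
    simp_rw [h2]
    rw [Finset.sum_comm]
    refine Finset.sum_congr rfl fun h _ => ?_
    rw [← Finset.mul_sum, AddChar.sum_mulShift _ (ZMod.isPrimitive_stdAddChar q)]
    simp [ZMod.card]
  have h3 : ‖((‖gs q α γ‖ ^ 2 : ℝ) : ℂ)‖ = ‖gs q α γ‖ ^ 2 := by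
    rw [Complex.norm_real]; simp
  rw [← h3, h1]
  refine (norm_sum_le _ _).trans ?_
  rw [Finset.card_filter]
  push_cast
  rw [Finset.mul_sum]
  refine Finset.sum_le_sum fun h _ => ?_
  rw [norm_mul, norm_char]
  split_ifs <;> simp

lemma card_tors (q : ℕ) [NeZero q] (a : ZMod q) (ha : IsUnit a) (A : ℕ) (hA : 0 < A) :
    (Finset.univ.filter (fun h : ZMod q => 2 * (a * (A : ZMod q)) * h = 0)).card ≤ 2 * A := by
  have := IsAddCyclic.card_nsmul_eq_zero_le (α := ZMod q) (n := 2 * A) (by omega)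
  refine le_trans (Finset.card_le_card ?_) this
  intro h
  simp only [Finset.mem_filter, Finset.mem_univ, true_and]
  intro hh
  rw [nsmul_eq_mul]
  push_cast
  have : a * (2 * A * h) = 0 := by rw [← hh]; ring
  exact (ha.mul_right_eq_zero).1 this

lemma card_tors' (q : ℕ) [NeZero q] (a : ZMod q) (ha : IsUnit a) (A : ℕ)
    (hA : Nat.Coprime q (2 * A)) :
    (Finset.univ.filter (fun h : ZMod q => 2 * (a * (A : ZMod q)) * h = 0)).card ≤ 1 := by
  rw [Finset.card_le_one]
  have hu : IsUnit ((2 * A : ℕ) : ZMod q) := (ZMod.isUnit_iff_coprime _ _).2 hA.symm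
  have key : ∀ h : ZMod q, 2 * (a * (A : ZMod q)) * h = 0 → h = 0 := by
    intro h hh
    have : a * (((2 * A : ℕ) : ZMod q) * h) = 0 := by rw [← hh]; push_cast; ring
    exact (hu.mul_right_eq_zero).1 ((ha.mul_right_eq_zero).1 this)
  intro x hx y hy
  simp only [Finset.mem_filter, Finset.mem_univ, true_and] at hx hy
  rw [key x hx, key y hy]

lemma gs_le (q : ℕ) [NeZero q] (a : ZMod q) (ha : IsUnit a) (A : ℕ) (hA : 0 < A) (γ : ZMod q) :
    ‖gs q (a * A) γ‖ ≤ √(2 * A * q) := by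
  apply Real.le_sqrt_of_sq_le
  refine (gs_norm_sq q _ γ).trans ?_
  have : ((Finset.univ.filter (fun h : ZMod q => 2 * (a * (A : ZMod q)) * h = 0)).card : ℝ) ≤ 2 * A := by
    exact_mod_cast card_tors q a ha A hA
  nlinarith [Nat.cast_nonneg (α := ℝ) q]

lemma gs_le' (q : ℕ) [NeZero q] (a : ZMod q) (ha : IsUnit a) (A : ℕ)
    (hA : Nat.Coprime q (2 * A)) (γ : ZMod q) :
    ‖gs q (a * A) γ‖ ≤ √q := by
  apply Real.le_sqrt_of_sq_le
  refine (gs_norm_sq q _ γ).trans ?_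
  have : ((Finset.univ.filter (fun h : ZMod q => 2 * (a * (A : ZMod q)) * h = 0)).card : ℝ) ≤ 1 := by
    exact_mod_cast card_tors' q a ha A hA
  nlinarith [Nat.cast_nonneg (α := ℝ) q]

lemma gs_zero (q : ℕ) [NeZero q] (a : ZMod q) (ha : IsUnit a) (A : ℕ) (b : ℤ) (p : ℕ)
    (hp : p.Prime) (hpq : p ∣ q) (hpA : p ∣ A) (hpb : ¬ (p : ℤ) ∣ b) :
    gs q (a * A) (a * b) = 0 := by
  obtain ⟨t, ht⟩ := hpq
  obtain ⟨A', rfl⟩ := hpA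
  have hq0 : ((p : ZMod q) * t) = 0 := by
    have : ((p * t : ℕ) : ZMod q) = 0 := by rw [← ht]; exact ZMod.natCast_self q
    push_cast at this
    exact this
  have h1 : gs q (a * ((p * A' : ℕ) : ZMod q)) (a * b) =
      ZMod.stdAddChar (a * (b : ZMod q) * (t : ZMod q) : ZMod q) * gs q (a * ((p * A' : ℕ) : ZMod q)) (a * b) := by
    conv_lhs => unfold gs
    rw [← Equiv.sum_comp (Equiv.addRight (t : ZMod q))]
    unfold gs
    rw [Finset.mul_sum]
    refine Finset.sum_congr rfl fun x _ => ?_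
    rw [← AddChar.map_add_eq_mul]
    congr 1
    simp only [Equiv.coe_addRight]
    push_cast
    linear_combination (a * A' * (2 * x + t)) * hq0
  have h2 : (ZMod.stdAddChar (a * (b : ZMod q) * (t : ZMod q) : ZMod q) : ℂ) ≠ 1 := by
    intro h
    rw [← AddChar.map_zero_eq_one (ZMod.stdAddChar (N := q))] at h
    have h3 := ZMod.injective_stdAddChar h
    rw [mul_assoc] at h3
    have h4 := (ha.mul_right_eq_zero).1 h3
    have h5 : ((b * t : ℤ) : ZMod q) = 0 := by push_cast; exact h4
    rw [ZMod.intCast_zmod_eq_zero_iff_dvd] at h5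
    rw [ht] at h5
    push_cast at h5
    have ht0 : (t : ℤ) ≠ 0 := by
      intro h
      have : t = 0 := by exact_mod_cast h
      subst this
      exact NeZero.ne q (by simpa using ht)
    exact hpb (Int.dvd_of_mul_dvd_mul_right ht0 h5)
  have h3 : (1 - (ZMod.stdAddChar (a * (b : ZMod q) * (t : ZMod q) : ZMod q) : ℂ)) * gs q (a * ((p * A' : ℕ) : ZMod q)) (a * b) = 0 := by
    rw [sub_mul, one_mul, ← h1, sub_self]
  rcases mul_eq_zero.1 h3 with h | h
  · exact absurd (sub_eq_zero.1 h).symm h2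
  · exact h

end CM


namespace CM
open Complex Real

/-- summand of the theta series -/
noncomputable def St (A : ℕ) (b : ℤ) (l α : ℝ) (n : ℤ) : ℂ :=
  cexp (-(l * A * ((n : ℂ) + b / (2 * A)) ^ 2) - 2 * π * I * α * (A * (n : ℂ) ^ 2 + b * n))

noncomputable def S (A : ℕ) (b : ℤ) (l α : ℝ) : ℂ := ∑' n : ℤ, St A b l α n

lemma summable_gauss (t : ℂ) (ht : 0 < t.re) (z : ℂ) :
    Summable fun n : ℤ => cexp (-π * t * n ^ 2 + 2 * π * I * n * z) := by
  have h := (summable_jacobiTheta₂_term_iff z (I * t)).2 (by simpa using ht)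
  refine h.congr fun n => ?_
  unfold jacobiTheta₂_term
  congr 1
  linear_combination (π * (n : ℂ) ^ 2 * t) * I_sq

lemma summable_St (A : ℕ) (hA : 0 < A) (b : ℤ) (l : ℝ) (hl : 0 < l) (α : ℝ) :
    Summable (St A b l α) := by
  have hA' : (A : ℂ) ≠ 0 := by exact_mod_cast hA.ne'
  have hpi : (π : ℂ) ≠ 0 := by exact_mod_cast Real.pi_ne_zero
  have h := summable_gauss ((A / π : ℝ) * (l + 2 * π * I * α)) (by
    rw [re_ofReal_mul]
    have : (l + 2 * π * I * α : ℂ).re = l := by simp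
    rw [this]; have := Real.pi_pos; positivity) (-(l * b / (2 * π * I)) - α * b)
  have h2 := h.mul_left (cexp (-(l * A * ((b : ℂ) / (2 * A)) ^ 2)))
  refine h2.congr fun n => ?_
  unfold St
  rw [← Complex.exp_add]
  congr 1
  push_cast
  field_simp
  ring

lemma tsum_gauss (τ : ℂ) (hτ : 0 < τ.re) (x : ℂ) :
    ∑' v : ℤ, cexp (-(π / τ * (v + x) ^ 2)) =
      τ ^ (1 / 2 : ℂ) * ∑' n : ℤ, cexp (-π * τ * n ^ 2 + 2 * π * I * n * (-x)) := by
  have h := Complex.tsum_exp_neg_quadratic hτ (-I * x)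
  have hτ0 : τ ≠ 0 := by rintro rfl; simp at hτ
  have h0 : τ ^ (1 / 2 : ℂ) ≠ 0 := by
    rw [Complex.cpow_ne_zero_iff]; left; exact hτ0
  have e1 : ∀ n : ℤ, cexp (-π * τ * n ^ 2 + 2 * π * I * n * (-x)) =
      cexp (-π * τ * n ^ 2 + 2 * π * (-I * x) * n) := by
    intro n; congr 1; ring
  have e2 : ∀ v : ℤ, cexp (-(π / τ * (v + x) ^ 2)) = cexp (-π / τ * (v + I * (-I * x)) ^ 2) := by
    intro n; congr 1
    have : I * (-I * x) = x := by linear_combination (-x) * I_sq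
    rw [this]; ring
  simp_rw [e1, e2, h]
  field_simp

lemma tsum_residue (q : ℕ) [NeZero q] (f : ℤ → ℂ) (hf : Summable f) :
    ∑' n : ℤ, f n = ∑ ρ : ZMod q, ∑' v : ℤ, f (v * q + ρ.val) := by
  have h1 : ∑' n : ℤ, f n = ∑' p : Fin q × ℤ, f (p.2 * q + (p.1 : ℕ)) := by
    rw [← (Int.divModEquiv q).symm.tsum_eq, ← (Equiv.prodComm (Fin q) ℤ).tsum_eq]
    rfl
  have hs : Summable fun p : Fin q × ℤ => f (p.2 * q + (p.1 : ℕ)) :=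
    ((Equiv.prodComm (Fin q) ℤ).trans (Int.divModEquiv q).symm).summable_iff.2 hf
  rw [h1, hs.tsum_prod, tsum_fintype]
  cases q with
  | zero => exact absurd rfl (NeZero.ne 0)
  | succ k => rfl

noncomputable def tau (A q : ℕ) (w : ℂ) : ℂ := π / (w * A * q ^ 2)

lemma S_eq (A : ℕ) (hA : 0 < A) (b : ℤ) (l : ℝ) (hl : 0 < l) (q : ℕ) [NeZero q] (a : ℤ) (α β : ℝ)
    (hα : α = β - a / q) (w : ℂ) (hw : w = l + 2 * π * I * β) (hτ : 0 < (tau A q w).re) :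
    S A b l α = cexp (2 * π * I * β * (b ^ 2 / (4 * A))) * (tau A q w) ^ (1 / 2 : ℂ) *
      ∑' n : ℤ, cexp (-π * tau A q w * n ^ 2 + 2 * π * I * n * (-(b / (2 * A * q)))) *
        gs q ((a : ZMod q) * A) (a * b - n) := by
  have hA' : (A : ℂ) ≠ 0 := by exact_mod_cast hA.ne'
  have hq' : (q : ℂ) ≠ 0 := by exact_mod_cast NeZero.ne q
  have hpi : (π : ℂ) ≠ 0 := by exact_mod_cast Real.pi_ne_zero
  have hw0 : w ≠ 0 := by rintro rfl; simp [tau] at hτ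
  set τ := tau A q w with hτdef
  unfold S
  rw [tsum_residue q _ (summable_St A hA b l hl α)]
  have h1 : ∀ ρ : ZMod q, ∑' v : ℤ, St A b l α (v * q + ρ.val) =
      ∑' n : ℤ, cexp (2 * π * I * β * (b ^ 2 / (4 * A))) * τ ^ (1 / 2 : ℂ) *
      (cexp (-π * τ * n ^ 2 + 2 * π * I * n * (-(b / (2 * A * q)))) *
        ZMod.stdAddChar (((a : ZMod q) * A) * ρ ^ 2 + (a * b - n) * ρ : ZMod q)) := by
    intro ρ
    have e1 : ∀ v : ℤ, St A b l α (v * q + ρ.val) =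
        cexp (2 * π * I * β * (b ^ 2 / (4 * A))) * 
          ZMod.stdAddChar (((a : ZMod q) * A) * ρ ^ 2 + a * b * ρ : ZMod q) *
          cexp (-(π / τ * (v + (ρ.val + b / (2 * A)) / q) ^ 2)) := by
      intro v
      have hc : ((a : ZMod q) * A) * ρ ^ 2 + a * b * ρ = 
          ((a * (A * (v * q + ρ.val) ^ 2 + b * (v * q + ρ.val)) : ℤ) : ZMod q) := by
        push_cast
        simp
        ring
      rw [hc, ZMod.stdAddChar_coe, ← Complex.exp_add, ← Complex.exp_add]
      unfold St
      congr 1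
      rw [hτdef, tau, hα, hw]
      rw [hw] at hw0
      push_cast
      field_simp
      ring
    simp_rw [e1]
    rw [tsum_mul_left, tsum_gauss τ hτ, tsum_mul_left]
    rw [← tsum_mul_left, ← tsum_mul_left, ← tsum_mul_left]
    refine tsum_congr fun n => ?_
    have hc : ((a : ZMod q) * A) * ρ ^ 2 + (a * b - n) * ρ =
       ((a : ZMod q) * A) * ρ ^ 2 + a * b * ρ + ((-n * ρ.val : ℤ) : ZMod q) := by
      push_cast; simp; ring
    rw [hc, AddChar.map_add_eq_mul _ _ ((-n * ρ.val : ℤ) : ZMod q), ZMod.stdAddChar_coe]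
    have : cexp (-π * τ * n ^ 2 + 2 * π * I * n * (-((ρ.val + b / (2 * A)) / q))) =
      cexp (-π * τ * n ^ 2 + 2 * π * I * n * (-(b / (2 * A * q)))) *
       cexp (2 * π * I * ((-n * ρ.val : ℤ) : ℂ) / q) := by
      rw [← Complex.exp_add]
      congr 1
      push_cast
      field_simp
      ring
    rw [this]
    ring
  simp_rw [h1]
  have hsum := summable_gauss τ hτ (-(b / (2 * A * q)))
  rw [← Summable.tsum_finsetSum]
  · rw [← tsum_mul_left]
    refine tsum_congr fun n => ?_
    rw [← Finset.mul_sum, ← Finset.mul_sum]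
    rfl
  · intro ρ _
    apply Summable.mul_left
    apply Summable.of_norm
    refine hsum.norm.congr fun n => ?_
    rw [norm_mul, norm_char, mul_one]

lemma tsum_gauss_bound (f : ℤ → ℂ) (x g : ℝ) (hx : 0 < x) (hg : 0 ≤ g)
    (hf : ∀ n, ‖f n‖ ≤ Real.exp (-π * x * n ^ 2) * g) :
    ‖(∑' n, f n) - f 0‖ ≤ g * (2 / x) := by
  have hz := hasSum_zeta_two
  have hz2 : HasSum (fun n : ℤ => g / (π * x) * (1 / (n : ℝ) ^ 2)) (g / (π * x) * (π ^ 2 / 3)) := by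
    apply HasSum.mul_left
    have := HasSum.of_nat_of_neg (f := fun n : ℤ => 1 / (n : ℝ) ^ 2) (g := π ^ 2 / 6) (g' := π ^ 2 / 6)
      (by simpa using hz) (by simpa using hz)
    have e : π ^ 2 / 6 + π ^ 2 / 6 - 1 / (((0 : ℤ) : ℝ)) ^ 2 = π ^ 2 / 3 := by
      norm_num; ring
    rw [← e]; exact this
  have hb : ∀ n : ℤ, ‖if n = 0 then 0 else f n‖ ≤ g / (π * x) * (1 / (n : ℝ) ^ 2) := by
    intro n
    split_ifs with h
    · simp [h]
    · refine (hf n).trans ?_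
      have hn : (0 : ℝ) < (n : ℝ) ^ 2 := by
        have : (n : ℝ) ≠ 0 := by exact_mod_cast h
        positivity
      have hy : 0 < π * x * n ^ 2 := by have := Real.pi_pos; positivity
      have h1 : Real.exp (-π * x * n ^ 2) ≤ 1 / (π * x * n ^ 2) := by
        rw [show -π * x * n ^ 2 = -(π * x * (n : ℝ) ^ 2) by ring, Real.exp_neg, one_div]
        apply inv_anti₀ hy
        linarith [Real.add_one_le_exp (π * x * (n : ℝ) ^ 2)]
      calc _ ≤ 1 / (π * x * n ^ 2) * g := by gcongr
        _ = _ := by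
          have := Real.pi_pos
          field_simp
  have hs : Summable fun n : ℤ => if n = 0 then 0 else f n :=
    Summable.of_norm_bounded hz2.summable hb
  have hsf : Summable f := by
    have := hs.add (hasSum_ite_eq (0 : ℤ) (f 0)).summable
    refine this.congr fun n => ?_
    split_ifs with h <;> simp [h]
  rw [hsf.tsum_eq_add_tsum_ite 0, add_sub_cancel_left]
  refine (tsum_of_norm_bounded hz2 hb).trans ?_
  have h3 := Real.pi_le_four
  have hpi := Real.pi_pos
  calc _ = g * (π / 3 / x) := by field_simp
    _ ≤ _ := by
      gcongr
      linarith

lemma w_facts (l β : ℝ) (hl : 0 < l) (w : ℂ) (hw : w = l + 2 * π * I * β) :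
    w.re = l ∧ ‖w‖ ^ 2 = l ^ 2 + (2 * π * β) ^ 2 ∧ 0 < ‖w‖ := by
  have h1 : w.re = l := by rw [hw]; simp
  have h2 : w.im = 2 * π * β := by rw [hw]; simp
  refine ⟨h1, ?_, ?_⟩
  · rw [← Complex.normSq_eq_norm_sq, Complex.normSq_apply, h1, h2]; ring
  · rw [norm_pos_iff]; rintro rfl; simp at h1; linarith

lemma tau_re (A : ℕ) (q : ℕ) (w : ℂ) :
    (tau A q w).re = π * w.re / (‖w‖ ^ 2 * A * q ^ 2) := by
  have : tau A q w = ((π / (A * q ^ 2) : ℝ) : ℂ) * w⁻¹ := by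
    unfold tau; push_cast
    rw [div_mul_eq_mul_div, mul_comm]
    by_cases hw : w = 0
    · simp [hw]
    field_simp
  rw [this, Complex.re_ofReal_mul, Complex.inv_re, Complex.normSq_eq_norm_sq]
  ring

lemma tau_cpow (A q : ℕ) (w : ℂ) :
    (tau A q w) ^ (1 / 2 : ℂ) = (√(π / A) / q : ℝ) * (w⁻¹) ^ (1 / 2 : ℂ) := by
  have : tau A q w = ((π / (A * q ^ 2) : ℝ) : ℂ) * w⁻¹ := by
    unfold tau; push_cast
    rw [div_mul_eq_mul_div, mul_comm]
    by_cases hw : w = 0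
    · simp [hw]
    field_simp
  rcases Nat.eq_zero_or_pos A with rfl | hA
  · simp [this]
  rcases Nat.eq_zero_or_pos q with rfl | hq
  · simp [this]
  have hpos : (0:ℝ) < π / (A * q ^ 2) := by have := Real.pi_pos; positivity
  by_cases hw : w = 0
  · subst hw; rw [this]; simp
  have e1 : (√(π / A) / q : ℝ) = √(π / (A * q ^ 2)) := by
    rw [← div_div, Real.sqrt_div' (π / A) (by positivity : (0:ℝ) ≤ (q:ℝ) ^ 2), Real.sqrt_sq (by positivity)]
  rw [this, e1, Complex.cpow_def_of_ne_zero (mul_ne_zero (by exact_mod_cast hpos.ne') (inv_ne_zero hw)),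
    Complex.log_ofReal_mul hpos (inv_ne_zero hw), add_mul, Complex.exp_add,
    Complex.cpow_def_of_ne_zero (inv_ne_zero hw)]
  congr 1
  rw [Real.sqrt_eq_rpow, Real.rpow_def_of_pos hpos]
  push_cast
  rfl

lemma tau_cpow_norm (A q : ℕ) (w : ℂ) :
    ‖(w⁻¹) ^ (1 / 2 : ℂ)‖ = √(1 / ‖w‖) := by
  have h : (1 / 2 : ℂ) = ((1 / 2 : ℝ) : ℂ) := by push_cast; rfl
  rw [h, Complex.norm_cpow_real, norm_inv, Real.sqrt_eq_rpow, one_div ‖w‖]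

/-- main term factor -/
noncomputable def Mt (A : ℕ) (b : ℤ) (q : ℕ) [NeZero q] (a : ℤ) (β : ℝ) (w : ℂ) : ℂ :=
  cexp (2 * π * I * β * (b ^ 2 / (4 * A))) * ((√(π / A) : ℝ) * (w⁻¹) ^ (1 / 2 : ℂ)) *
    (gs q ((a : ZMod q) * A) (a * b) / q)

lemma Mt_norm (A : ℕ) (b : ℤ) (q : ℕ) [NeZero q] (a : ℤ) (β : ℝ) (w : ℂ) :
    ‖Mt A b q a β w‖ = √(π / A) * √(1 / ‖w‖) * (‖gs q ((a : ZMod q) * A) (a * b)‖ / q) := by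
  unfold Mt
  rw [norm_mul, norm_mul, norm_mul, tau_cpow_norm A q, norm_div, Complex.norm_real, Complex.norm_natCast]
  have : ‖cexp (2 * π * I * β * (b ^ 2 / (4 * A)))‖ = 1 := by
    rw [show (2 * π * I * β * (b ^ 2 / (4 * A)) : ℂ) = ((2 * π * β * (b ^ 2 / (4 * A)) : ℝ) : ℂ) * I by
      push_cast; ring]
    exact Complex.norm_exp_ofReal_mul_I _
  rw [this, Real.norm_of_nonneg (Real.sqrt_nonneg _)]
  ring

lemma sqrt_comb (A q : ℕ) (hA : 0 < A) (hq : 0 < q) (x : ℝ) (hx : 0 < x) :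
    √(π / A) * √(1 / x) * (√(2 * A * q) / q) = √(2 * π / (x * q)) := by
  have hA' : (0:ℝ) < A := by exact_mod_cast hA
  have hq' : (0:ℝ) < q := by exact_mod_cast hq
  have hpi := Real.pi_pos
  have : √(2 * A * q) / q = √(2 * A / q) := by
    rw [show (2 * A / q : ℝ) = 2 * A * q / q ^ 2 by field_simp, Real.sqrt_div' _ (by positivity),
      Real.sqrt_sq hq'.le]
  rw [this, ← Real.sqrt_mul (by positivity), ← Real.sqrt_mul (by positivity)]
  congr 1
  field_simp

lemma sqrt_comb' (A q : ℕ) (hA : 0 < A) (hq : 0 < q) (x : ℝ) (hx : 0 < x) :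
    √(π / A) * √(1 / x) * (√q / q) = √(π / A) * √(1 / (x * q)) := by
  have hq' : (0:ℝ) < q := by exact_mod_cast hq
  have : √(q : ℝ) / q = √(1 / q) := by
    rw [show (1 / q : ℝ) = q / q ^ 2 by field_simp, Real.sqrt_div' _ (by positivity),
      Real.sqrt_sq hq'.le]
  rw [this, mul_assoc, ← Real.sqrt_mul (by positivity)]
  congr 2
  field_simp

lemma S_approx (A : ℕ) (hA : 0 < A) (b : ℤ) (l : ℝ) (hl : 0 < l) (q : ℕ) [NeZero q] (a : ℤ)
    (ha : IsUnit (a : ZMod q)) (α β : ℝ)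
    (hα : α = β - a / q) (w : ℂ) (hw : w = l + 2 * π * I * β) :
    ‖S A b l α - Mt A b q a β w‖ ≤ √(2 * π / (‖w‖ * q)) * (‖w‖ ^ 2 * A * q ^ 2 / l) := by
  obtain ⟨h1, h2, h3⟩ := w_facts l β hl w hw
  have hA' : (0:ℝ) < A := by exact_mod_cast hA
  have hq : 0 < q := Nat.pos_of_ne_zero (NeZero.ne q)
  have hq' : (0:ℝ) < q := by exact_mod_cast hq
  have hpi := Real.pi_pos
  have hτ : 0 < (tau A q w).re := by
    rw [tau_re, h1]; positivity
  rw [S_eq A hA b l hl q a α β hα w hw hτ]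
  set f : ℤ → ℂ := fun n => cexp (-π * tau A q w * n ^ 2 + 2 * π * I * n * (-(b / (2 * A * q)))) *
        gs q ((a : ZMod q) * A) (a * b - n) with hf
  have hM : Mt A b q a β w = cexp (2 * π * I * β * (b ^ 2 / (4 * A))) * (tau A q w) ^ (1 / 2 : ℂ) * f 0 := by
    rw [tau_cpow, hf]
    unfold Mt
    push_cast
    simp
    ring
  rw [hM, ← mul_sub, norm_mul, norm_mul, tau_cpow, norm_mul, tau_cpow_norm A q, Complex.norm_real]
  have he : ‖cexp (2 * π * I * β * (b ^ 2 / (4 * A)))‖ = 1 := by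
    rw [show (2 * π * I * β * (b ^ 2 / (4 * A)) : ℂ) = ((2 * π * β * (b ^ 2 / (4 * A)) : ℝ) : ℂ) * I by
      push_cast; ring]
    exact Complex.norm_exp_ofReal_mul_I _
  have hb := tsum_gauss_bound f (tau A q w).re (√(2 * A * q)) hτ (Real.sqrt_nonneg _) (by
    intro n
    rw [hf, norm_mul, Complex.norm_exp]
    refine mul_le_mul (le_of_eq ?_) (gs_le q a ha A hA _) (norm_nonneg _) (Real.exp_nonneg _)
    congr 1
    have : (-π * tau A q w * n ^ 2 + 2 * π * I * n * (-(b / (2 * A * q))) : ℂ) =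
      ((-π * n ^ 2 : ℝ) : ℂ) * tau A q w + ((-2 * π * n * (b / (2 * A * q)) : ℝ) : ℂ) * I := by
      push_cast; ring
    rw [this, Complex.add_re, Complex.re_ofReal_mul, Complex.re_ofReal_mul]
    simp
    ring)
  rw [he, one_mul, Real.norm_of_nonneg (by positivity), ← sqrt_comb A q hA hq _ h3]
  calc _ ≤ √(π / A) / q * √(1 / ‖w‖) * (√(2 * A * q) * (2 / (tau A q w).re)) := by gcongr
    _ = √(π / A) * √(1 / ‖w‖) * (√(2 * A * q) / q) * (2 / π * (‖w‖ ^ 2 * A * q ^ 2 / l)) := by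
      rw [tau_re, h1]; field_simp
    _ ≤ √(π / A) * √(1 / ‖w‖) * (√(2 * A * q) / q) * (1 * (‖w‖ ^ 2 * A * q ^ 2 / l)) := by
      gcongr
      rw [div_le_one hpi]; exact Real.two_le_pi
    _ = _ := by ring

end CM


namespace CM
open Complex Real MeasureTheory Set ProbabilityTheory

noncomputable def gmu (a : ℝ) : Measure ℝ :=
  (volume.restrict (Ioi (0:ℝ))).withDensity (fun s => ENNReal.ofReal (s ^ (a - 1)))

lemma gint_real (a : ℝ) (ha : 0 < a) (t : ℝ) (ht : 0 < t) :
    IntegrableOn (fun s : ℝ => s ^ (a - 1) * Real.exp (-t * s)) (Ioi 0) := by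
  have := integrableOn_rpow_mul_exp_neg_mul_rpow (p := 1) (s := a - 1) (b := t) (by linarith) one_pos ht
  simpa using this

lemma gmu_integrable (a : ℝ) (ha : 0 < a) (t : ℝ) (ht : t < 0) : t ∈ integrableExpSet id (gmu a) := by
  show Integrable _ _
  unfold gmu
  rw [integrable_withDensity_iff_integrable_smul' (by fun_prop) (by simp)]
  have h := gint_real a ha (-t) (by linarith)
  refine h.congr_fun (fun s hs => ?_) measurableSet_Ioi
  simp only [id, smul_eq_mul, neg_neg]
  rw [ENNReal.toReal_ofReal (Real.rpow_nonneg (le_of_lt hs) _)]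

lemma cmgf_eq (a : ℝ) (z : ℂ) : complexMGF id (gmu a) z =
    ∫ s in Ioi (0:ℝ), (((s ^ (a - 1) : ℝ)) : ℂ) * cexp (z * s) := by
  unfold complexMGF gmu
  rw [integral_withDensity_eq_integral_toReal_smul (by fun_prop) (by simp)]
  refine setIntegral_congr_fun measurableSet_Ioi (fun s hs => ?_)
  simp only [id]
  rw [ENNReal.toReal_ofReal (Real.rpow_nonneg (le_of_lt hs) _)]
  rfl

lemma gamma_complex (a : ℝ) (ha : 0 < a) (w : ℂ) (hw : 0 < w.re) :
    ∫ s in Ioi (0:ℝ), (((s ^ (a - 1) : ℝ)) : ℂ) * cexp (-w * s) = (w⁻¹) ^ (a : ℂ) * (Real.Gamma a : ℝ) := by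
  have hU : IsOpen {z : ℂ | z.re < 0} := isOpen_lt Complex.continuous_re continuous_const
  have h1 : AnalyticOnNhd ℂ (complexMGF id (gmu a)) {z : ℂ | z.re < 0} := by
    refine analyticOnNhd_complexMGF.mono ?_
    intro z hz
    simp only [mem_setOf_eq] at hz ⊢
    rw [mem_interior]
    exact ⟨Iio 0, fun t ht => gmu_integrable a ha t ht, isOpen_Iio, hz⟩
  have h2 : AnalyticOnNhd ℂ (fun z : ℂ => ((-z)⁻¹) ^ (a : ℂ) * (Real.Gamma a : ℝ)) {z : ℂ | z.re < 0} := by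
    apply DifferentiableOn.analyticOnNhd _ hU
    intro z hz
    simp only [mem_setOf_eq] at hz
    apply DifferentiableAt.differentiableWithinAt
    apply DifferentiableAt.mul_const
    have hz0 : -z ≠ 0 := by rintro h; rw [neg_eq_zero] at h; simp [h] at hz
    apply DifferentiableAt.cpow_const
    · exact (differentiableAt_id.neg).inv hz0
    · left
      rw [Complex.inv_re]
      have : 0 < normSq (-z) := normSq_pos.2 hz0
      have : 0 < (-z).re := by simpa using hz
      positivity
  have hpc : IsPreconnected {z : ℂ | z.re < 0} := (convex_halfSpace_re_lt 0).isPreconnected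
  have h3 : EqOn (complexMGF id (gmu a)) (fun z : ℂ => ((-z)⁻¹) ^ (a : ℂ) * (Real.Gamma a : ℝ)) {z : ℂ | z.re < 0} := by
    refine h1.eqOn_of_preconnected_of_frequently_eq h2 hpc (z₀ := -1) (by simp) ?_
    have hreal : ∀ t : ℝ, 0 < t → complexMGF id (gmu a) (-t) = ((- -(t:ℂ))⁻¹) ^ (a : ℂ) * (Real.Gamma a : ℝ) := by
      intro t ht
      rw [cmgf_eq]
      have := Real.integral_rpow_mul_exp_neg_mul_Ioi ha ht
      have h4 := congrArg (fun x : ℝ => (x : ℂ)) this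
      rw [← integral_complex_ofReal] at h4
      rw [neg_neg]
      push_cast at h4
      rw [Complex.ofReal_cpow (by positivity)] at h4
      push_cast at h4
      rw [one_div] at h4
      rw [← h4]
      refine setIntegral_congr_fun measurableSet_Ioi (fun s hs => ?_)
      simp
    rw [Filter.frequently_iff]
    intro V hV
    rw [mem_nhdsWithin] at hV
    obtain ⟨O, hO, hmem, hsub⟩ := hV
    have hcont : Filter.Tendsto (fun t : ℝ => (-(t : ℂ))) (nhdsWithin 1 (Ioi 1)) (nhds (-1)) := by
      have : ContinuousAt (fun t : ℝ => (-(t : ℂ))) 1 := by fun_prop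
      have := this.tendsto
      simp only [Complex.ofReal_one] at this
      exact this.mono_left nhdsWithin_le_nhds
    have hev := (hcont.eventually (hO.mem_nhds hmem)).and self_mem_nhdsWithin
    obtain ⟨t, ht1, ht2⟩ := hev.exists
    refine ⟨-(t:ℂ), hsub ⟨ht1, ?_⟩, hreal t (lt_trans one_pos ht2)⟩
    simp only [mem_compl_iff, mem_singleton_iff, neg_inj]
    have : t ≠ 1 := ne_of_gt ht2
    exact_mod_cast this
  have h5 := h3 (x := -w) (by simpa using hw)
  rw [cmgf_eq] at h5
  simpa using h5

noncomputable def gg (a l : ℝ) (s : ℝ) : ℂ :=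
  (Ioi (0:ℝ)).indicator (fun s => (((s ^ (a - 1) * Real.exp (-l * s) : ℝ)) : ℂ)) s

lemma gg_integrable (a l : ℝ) (ha : 0 < a) (hl : 0 < l) : Integrable (gg a l) := by
  unfold gg
  rw [integrable_indicator_iff measurableSet_Ioi]
  exact (gint_real a ha l hl).ofReal

lemma gg_fourier (a l : ℝ) (ha : 0 < a) (hl : 0 < l) (β : ℝ) :
    FourierTransform.fourier (gg a l) β = ((l + 2 * π * I * β : ℂ)⁻¹) ^ (a : ℂ) * (Real.Gamma a : ℝ) := by
  rw [← gamma_complex a ha _ (by simpa using hl), Real.fourier_eq']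
  unfold gg
  rw [← integral_indicator measurableSet_Ioi]
  congr 1
  ext s
  by_cases hs : s ∈ Ioi (0:ℝ)
  · rw [indicator_of_mem hs, indicator_of_mem hs]
    push_cast
    rw [smul_eq_mul, mul_left_comm, ← Complex.exp_add]
    congr 2
    simp
    ring
  · rw [indicator_of_notMem hs, indicator_of_notMem hs]; simp

lemma K_facts (l : ℝ) (hl : 0 < l) : Integrable (fun β : ℝ => 1 / (l ^ 2 + β ^ 2)) ∧
    ∫ β : ℝ, 1 / (l ^ 2 + β ^ 2) = π / l := by
  have e : (fun β : ℝ => 1 / (l ^ 2 + β ^ 2)) = fun β => (1 / l ^ 2) * (fun x : ℝ => (1 + x ^ 2)⁻¹) (β / l) := by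
    ext β; field_simp
  constructor
  · rw [e]
    exact (integrable_inv_one_add_sq.comp_div hl.ne').const_mul _
  · rw [e, integral_const_mul, Measure.integral_comp_div (fun x : ℝ => (1 + x ^ 2)⁻¹) l, integral_univ_inv_one_add_sq, abs_of_pos hl, smul_eq_mul]
    field_simp

lemma winv_norm (a : ℝ) (w : ℂ) : ‖(w⁻¹) ^ (a : ℂ)‖ = ‖w‖ ^ (-a) := by
  rw [Complex.norm_cpow_real, norm_inv, Real.inv_rpow (norm_nonneg _), Real.rpow_neg (norm_nonneg _)]

/-- pointwise bound -/
lemma w_bound (a l β κ : ℝ) (ha : 5 / 2 ≤ a) (hl : 0 < l) (hκ : 0 < κ) (w : ℂ) (hw : w = l + 2 * π * I * β)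
    (hκw : κ ≤ ‖w‖) :
    ‖w‖ ^ (-a) ≤ l ^ (-(a - 5 / 2)) * κ ^ (-(1 / 2) : ℝ) * (1 / (l ^ 2 + β ^ 2)) := by
  obtain ⟨h1, h2, h3⟩ := w_facts l β hl w hw
  have hpi := Real.pi_gt_three
  have h4 : l ^ 2 + β ^ 2 ≤ ‖w‖ ^ 2 := by
    rw [h2, mul_pow]; nlinarith [sq_nonneg β, mul_nonneg (sq_nonneg β) (show 0 ≤ (2 * π) ^ 2 - 1 by nlinarith)]
  have h5 : l ≤ ‖w‖ := by rw [← h1]; exact (le_abs_self _).trans (Complex.abs_re_le_norm w)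
  have e : ‖w‖ ^ (-a) = ‖w‖ ^ (-(a - 5 / 2)) * ‖w‖ ^ (-(1 / 2) : ℝ) * (1 / ‖w‖ ^ 2) := by
    rw [one_div (‖w‖ ^ 2), ← Real.rpow_natCast, ← Real.rpow_neg h3.le, ← Real.rpow_add h3, ← Real.rpow_add h3]
    congr 1; push_cast; ring
  rw [e]
  have hp : 0 < l ^ 2 + β ^ 2 := by positivity
  refine mul_le_mul (mul_le_mul ?_ ?_ (by positivity) (by positivity)) ?_ (by positivity) (by positivity)
  · exact Real.rpow_le_rpow_of_nonpos hl h5 (by linarith)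
  · exact Real.rpow_le_rpow_of_nonpos hκ hκw (by norm_num)
  · exact one_div_le_one_div_of_le hp h4

lemma w_ne (l β : ℝ) (hl : 0 < l) : (l + 2 * π * I * β : ℂ) ≠ 0 := by
  intro h
  have := congrArg Complex.re h
  simp at this
  linarith

lemma winv_cont (a l : ℝ) (hl : 0 < l) :
    Continuous fun β : ℝ => ((l + 2 * π * I * β : ℂ)⁻¹) ^ (a : ℂ) := by
  rw [continuous_iff_continuousAt]
  intro β
  refine ContinuousAt.cpow ?_ continuousAt_const ?_
  · have hc : ContinuousAt (fun β : ℝ => (l + 2 * π * I * β : ℂ)) β := by fun_prop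
    exact hc.inv₀ (w_ne l β hl)
  · left
    rw [Complex.inv_re]
    have := normSq_pos.2 (w_ne l β hl)
    have h : (l + 2 * π * I * β : ℂ).re = l := by simp
    rw [h]; positivity

lemma winv_integrable (a l : ℝ) (ha : 5 / 2 ≤ a) (hl : 0 < l) :
    Integrable fun β : ℝ => ((l + 2 * π * I * β : ℂ)⁻¹) ^ (a : ℂ) := by
  refine Integrable.mono' ((K_facts l hl).1.const_mul (l ^ (-(a - 5 / 2)) * l ^ (-(1 / 2) : ℝ)))
    (winv_cont a l hl).aestronglyMeasurable (Filter.Eventually.of_forall fun β => ?_)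
  rw [winv_norm]
  refine w_bound a l β l ha hl hl _ rfl ?_
  have h1 := (w_facts l β hl _ rfl).1
  have := Complex.abs_re_le_norm (l + 2 * π * I * β)
  rw [h1] at this
  exact (le_abs_self _).trans this

lemma J_inf (a l D : ℝ) (ha : 5 / 2 ≤ a) (hl : 0 < l) (hD : 0 < D) :
    ∫ β : ℝ, cexp (2 * π * I * β * D) * ((l + 2 * π * I * β : ℂ)⁻¹) ^ (a : ℂ) =
      ((D ^ (a - 1) * Real.exp (-l * D) / Real.Gamma a : ℝ) : ℂ) := by
  have ha0 : 0 < a := by linarith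
  have hG : (Real.Gamma a : ℂ) ≠ 0 := by exact_mod_cast (Real.Gamma_pos_of_pos ha0).ne'
  have hF : FourierTransform.fourier (gg a l) = fun β : ℝ => ((l + 2 * π * I * β : ℂ)⁻¹) ^ (a : ℂ) * (Real.Gamma a : ℝ) := by
    ext β; exact gg_fourier a l ha0 hl β
  have hc : ContinuousAt (gg a l) D := by
    have : (fun s : ℝ => (((s ^ (a - 1) * Real.exp (-l * s) : ℝ)) : ℂ)) =ᶠ[nhds D] gg a l := by
      filter_upwards [isOpen_Ioi.mem_nhds hD] with s hs
      unfold gg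
      rw [indicator_of_mem hs]
    refine ContinuousAt.congr ?_ this
    apply Complex.continuous_ofReal.continuousAt.comp
    apply ContinuousAt.mul
    · exact Real.continuousAt_rpow_const _ _ (Or.inl hD.ne')
    · fun_prop
  have h := (gg_integrable a l ha0 hl).fourierInv_fourier_eq (by
    rw [hF]; exact (winv_integrable a l ha hl).mul_const _) hc
  rw [hF, Real.fourierInv_eq'] at h
  unfold gg at h
  rw [indicator_of_mem (show D ∈ Ioi (0:ℝ) from hD)] at h
  have h' : (∫ β : ℝ, cexp (2 * π * I * β * D) * ((l + 2 * π * I * β : ℂ)⁻¹) ^ (a : ℂ)) * (Real.Gamma a : ℝ) =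
      ((D ^ (a - 1) * Real.exp (-l * D) : ℝ) : ℂ) := by
    rw [← h, ← integral_mul_const]
    congr 1
    ext β
    rw [smul_eq_mul, mul_assoc]
    congr 2
    simp
    ring
  rw [ofReal_div, ← h', mul_div_cancel_right₀ _ hG]

end CM


namespace CM
open Complex Real MeasureTheory Set

variable {ι : Type*} [Fintype ι]

noncomputable def Theta (A : ι → ℕ) (b : ι → ℤ) (N : ℤ) (l α : ℝ) : ℂ :=
  cexp (-2 * π * I * α * N) * ∏ i, S (A i) (b i) l α

def sol (A : ι → ℕ) (b : ι → ℤ) (N : ℤ) : Set (ι → ℤ) :=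
  {u | ∑ i, (A i * u i ^ 2 + b i * u i) + N = 0}

noncomputable def Del (A : ι → ℕ) (b : ι → ℤ) (N : ℤ) : ℝ :=
  ∑ i, ((b i : ℝ) ^ 2 / (4 * A i)) - N

lemma sq_id (A : ι → ℕ) (hA : ∀ i, 0 < A i) (b : ι → ℤ) (N : ℤ) (u : ι → ℤ) :
    ∑ i, (A i : ℝ) * (u i + b i / (2 * A i)) ^ 2 =
      Del A b N + ((∑ i, (A i * u i ^ 2 + b i * u i) + N : ℤ) : ℝ) := by
  unfold Del
  push_cast
  have : ∀ i, (A i : ℝ) * (u i + b i / (2 * A i)) ^ 2 = (b i : ℝ) ^ 2 / (4 * A i) + (A i * u i ^ 2 + b i * u i) := by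
    intro i
    have : (A i : ℝ) ≠ 0 := by exact_mod_cast (hA i).ne'
    field_simp
    ring
  simp_rw [this]
  rw [Finset.sum_add_distrib]
  ring

lemma sol_bound (A : ι → ℕ) (hA : ∀ i, 0 < A i) (b : ι → ℤ) (N : ℤ) (u : ι → ℤ) (hu : u ∈ sol A b N) (i : ι) :
    ((u i : ℝ) + b i / (2 * A i)) ^ 2 ≤ Del A b N := by
  have h := sq_id A hA b N u
  have hu' : ∑ i, (A i * u i ^ 2 + b i * u i) + N = 0 := hu
  rw [hu'] at h
  simp only [Int.cast_zero, add_zero] at h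
  rw [← h]
  have h1 : (A i : ℝ) * (u i + b i / (2 * A i)) ^ 2 ≤ ∑ i, (A i : ℝ) * (u i + b i / (2 * A i)) ^ 2 :=
    Finset.single_le_sum (f := fun i => (A i : ℝ) * (u i + b i / (2 * A i)) ^ 2) (fun i _ => by positivity) (Finset.mem_univ i)
  refine le_trans ?_ h1
  have : (1 : ℝ) ≤ A i := by exact_mod_cast hA i
  nlinarith [sq_nonneg ((u i : ℝ) + b i / (2 * A i))]

lemma sol_finite (A : ι → ℕ) (hA : ∀ i, 0 < A i) (b : ι → ℤ) (N : ℤ) : (sol A b N).Finite := by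
  set D := Del A b N
  refine Set.Finite.subset (Set.Finite.pi (t := fun i => Set.Icc ⌊-(b i / (2 * A i) : ℝ) - (D + 1)⌋ ⌈-(b i / (2 * A i) : ℝ) + (D + 1)⌉)
    (fun i => Set.finite_Icc _ _)) ?_
  intro u hu i _
  have h := sol_bound A hA b N u hu i
  have h2 : |(u i : ℝ) + b i / (2 * A i)| ≤ D + 1 := by
    have h0 : 0 ≤ D := le_trans (sq_nonneg _) h
    apply abs_le_of_sq_le_sq _ (by linarith)
    refine h.trans ?_
    nlinarith
  rw [abs_le] at h2
  constructor
  · rw [Int.floor_le_iff]; linarith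
  · rw [Int.le_ceil_iff]; linarith

lemma int_char (x0 : ℝ) (m : ℤ) :
    ∫ α in x0..(x0 + 1), cexp (-2 * π * I * m * α) = if m = 0 then 1 else 0 := by
  split_ifs with h
  · simp [h]
  · have hpi : (π : ℂ) ≠ 0 := by exact_mod_cast Real.pi_ne_zero
    have hm : (m : ℂ) ≠ 0 := by exact_mod_cast h
    rw [integral_exp_mul_complex (by simp [hm, hpi])]
    have : cexp (-2 * π * I * m * ((x0 + 1 : ℝ) : ℂ)) = cexp (-2 * π * I * m * x0) := by
      rw [Complex.exp_eq_exp_iff_exists_int]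
      refine ⟨-m, ?_⟩
      push_cast; ring
    rw [this]; simp

lemma finite_bound (A : ι → ℕ) (hA : ∀ i, 0 < A i) (b : ι → ℤ) (N : ℤ) (l x0 : ℝ) (t : Finset ℤ) :
    ‖∫ α in x0..(x0 + 1), cexp (-2 * π * I * α * N) * ∏ i, ∑ n ∈ t, St (A i) (b i) l α n‖ ≤
      Real.exp (-l * Del A b N) * (sol A b N).ncard := by
  classical
  have e1 : ∀ α : ℝ, cexp (-2 * π * I * α * N) * ∏ i, ∑ n ∈ t, St (A i) (b i) l α n =
      ∑ u ∈ Fintype.piFinset (fun _ : ι => t), (Real.exp (-l * ∑ i, (A i : ℝ) * (u i + b i / (2 * A i)) ^ 2) : ℂ) *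
        cexp (-2 * π * I * ((∑ i, (A i * u i ^ 2 + b i * u i) + N : ℤ) : ℂ) * α) := by
    intro α
    rw [Finset.prod_univ_sum, Finset.mul_sum]
    refine Finset.sum_congr rfl fun u _ => ?_
    unfold St
    rw [← Complex.exp_sum, ← Complex.exp_add, Complex.ofReal_exp, ← Complex.exp_add]
    congr 1
    push_cast
    rw [Finset.sum_sub_distrib, Finset.sum_neg_distrib, ← Finset.mul_sum]
    have : ∑ i, ((l : ℂ) * (A i) * ((u i : ℂ) + b i / (2 * A i)) ^ 2) = (l : ℂ) * ∑ i, (A i * ((u i : ℂ) + b i / (2 * A i)) ^ 2) := by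
      rw [Finset.mul_sum]; refine Finset.sum_congr rfl fun i _ => ?_; ring
    rw [this]
    ring
  simp_rw [e1]
  rw [intervalIntegral.integral_finset_sum (by
    intro u _
    apply Continuous.intervalIntegrable
    fun_prop)]
  simp_rw [intervalIntegral.integral_const_mul, int_char]
  refine (norm_sum_le _ _).trans ?_
  have e2 : ∀ u : ι → ℤ, ‖(Real.exp (-l * ∑ i, (A i : ℝ) * (u i + b i / (2 * A i)) ^ 2) : ℂ) *
      (if ∑ i, (A i * u i ^ 2 + b i * u i) + N = 0 then 1 else 0)‖ =
      if u ∈ sol A b N then Real.exp (-l * Del A b N) else 0 := by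
    intro u
    by_cases h : ∑ i, (A i * u i ^ 2 + b i * u i) + N = 0
    · have h' : u ∈ sol A b N := h
      rw [if_pos h, if_pos h', mul_one, Complex.norm_real, Real.norm_of_nonneg (Real.exp_nonneg _),
        sq_id A hA b N u, h]
      simp
    · have h' : u ∉ sol A b N := h
      rw [if_neg h, if_neg h']; simp
  simp_rw [e2]
  rw [← Finset.sum_filter, Finset.sum_const, nsmul_eq_mul, mul_comm]
  gcongr
  rw [← Set.ncard_coe_finset]
  apply Set.ncard_le_ncard _ (sol_finite A hA b N)
  intro u hu
  simp at hu
  exact hu.2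

lemma St_norm (A : ℕ) (b : ℤ) (l α : ℝ) (n : ℤ) : ‖St A b l α n‖ = ‖St A b l 0 n‖ := by
  unfold St
  rw [Complex.norm_exp, Complex.norm_exp]
  congr 1
  have : ∀ α : ℝ, (-(l * A * ((n : ℂ) + b / (2 * A)) ^ 2) - 2 * π * I * α * (A * (n : ℂ) ^ 2 + b * n)) =
    ((-(l * A * ((n : ℝ) + b / (2 * A)) ^ 2) : ℝ) : ℂ) + ((- 2 * π * α * (A * (n : ℝ) ^ 2 + b * n) : ℝ) : ℂ) * I := by
    intro α; push_cast; ring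
  rw [this, this, Complex.add_re, Complex.add_re, Complex.re_ofReal_mul, Complex.re_ofReal_mul, Complex.I_re]
  simp only [mul_zero]

lemma S_cont (A : ℕ) (hA : 0 < A) (b : ℤ) (l : ℝ) (hl : 0 < l) : Continuous (S A b l) := by
  unfold S
  refine continuous_tsum (u := fun n => ‖St A b l 0 n‖) ?_ (summable_St A hA b l hl 0).norm ?_
  · intro n; unfold St; fun_prop
  · intro n α; rw [St_norm]

lemma Theta_cont (A : ι → ℕ) (hA : ∀ i, 0 < A i) (b : ι → ℤ) (N : ℤ) (l : ℝ) (hl : 0 < l) :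
    Continuous (Theta A b N l) := by
  unfold Theta
  refine Continuous.mul (by fun_prop) (continuous_finset_prod _ fun i _ => S_cont _ (hA i) _ _ hl)

lemma Theta_int (A : ι → ℕ) (hA : ∀ i, 0 < A i) (b : ι → ℤ) (N : ℤ) (l x0 : ℝ) (hl : 0 < l) :
    ‖∫ α in x0..(x0 + 1), Theta A b N l α‖ ≤ Real.exp (-l * Del A b N) * (sol A b N).ncard := by
  have hT : Filter.Tendsto (fun t : Finset ℤ => ∫ α in x0..(x0 + 1), cexp (-2 * π * I * α * N) * ∏ i, ∑ n ∈ t, St (A i) (b i) l α n)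
      Filter.atTop (nhds (∫ α in x0..(x0 + 1), Theta A b N l α)) := by
    apply intervalIntegral.tendsto_integral_filter_of_dominated_convergence
      (bound := fun _ => ∏ i, ∑' n, ‖St (A i) (b i) l 0 n‖)
    · refine Filter.Eventually.of_forall fun t => Continuous.aestronglyMeasurable ?_
      unfold St
      fun_prop
    · refine Filter.Eventually.of_forall fun t => Filter.Eventually.of_forall fun α _ => ?_
      rw [norm_mul, norm_prod]
      have : ‖cexp (-2 * π * I * α * N)‖ = 1 := by
        rw [show (-2 * π * I * α * N : ℂ) = ((-2 * π * α * N : ℝ) : ℂ) * I by push_cast; ring]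
        exact Complex.norm_exp_ofReal_mul_I _
      rw [this, one_mul]
      refine Finset.prod_le_prod (fun _ _ => norm_nonneg _) fun i _ => ?_
      refine (norm_sum_le _ _).trans ?_
      simp_rw [St_norm _ _ _ α]
      exact (summable_St (A i) (hA i) (b i) l hl 0).norm.sum_le_tsum _ (fun _ _ => norm_nonneg _)
    · exact intervalIntegrable_const
    · refine Filter.Eventually.of_forall fun α _ => ?_
      refine Filter.Tendsto.const_mul _ (tendsto_finset_prod _ fun i _ => ?_)
      exact (summable_St (A i) (hA i) (b i) l hl α).hasSum
  exact le_of_tendsto hT.norm (Filter.Eventually.of_forall fun t => finite_bound A hA b N l x0 t)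

end CM


namespace CM
open Complex Real MeasureTheory Set

variable {ι : Type*} [Fintype ι]

lemma prod_diff (s : Finset ι) (f g : ι → ℂ) (m d : ι → ℝ) (hm : ∀ i, ‖g i‖ ≤ m i) (hd : ∀ i, ‖f i - g i‖ ≤ d i) :
    ‖∏ i ∈ s, f i - ∏ i ∈ s, g i‖ ≤ ∏ i ∈ s, (m i + d i) - ∏ i ∈ s, m i := by
  classical
  have hm0 : ∀ i, 0 ≤ m i := fun i => (norm_nonneg _).trans (hm i)
  have hd0 : ∀ i, 0 ≤ d i := fun i => (norm_nonneg _).trans (hd i)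
  have hf : ∀ i, ‖f i‖ ≤ m i + d i := fun i => by
    calc ‖f i‖ = ‖g i + (f i - g i)‖ := by congr 1; ring
      _ ≤ _ := (norm_add_le _ _).trans (add_le_add (hm i) (hd i))
  induction s using Finset.induction_on with
  | empty => simp
  | insert i s hi ih =>
    rw [Finset.prod_insert hi, Finset.prod_insert hi, Finset.prod_insert hi, Finset.prod_insert hi]
    have e : f i * ∏ j ∈ s, f j - g i * ∏ j ∈ s, g j = (f i - g i) * ∏ j ∈ s, f j +
        g i * (∏ j ∈ s, f j - ∏ j ∈ s, g j) := by ring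
    rw [e]
    refine (norm_add_le _ _).trans ?_
    rw [norm_mul, norm_mul]
    have h1 : ‖∏ j ∈ s, f j‖ ≤ ∏ j ∈ s, (m j + d j) := by
      rw [norm_prod]
      exact Finset.prod_le_prod (fun _ _ => norm_nonneg _) (fun j _ => hf j)
    calc _ ≤ d i * ∏ j ∈ s, (m j + d j) + m i * (∏ j ∈ s, (m j + d j) - ∏ j ∈ s, m j) := by
          gcongr
          · exact hd0 i
          · exact hd i
          · exact hm0 i
          · exact hm i
      _ = _ := by ring

lemma char_norm (α : ℝ) (N : ℤ) : ‖cexp (-2 * π * I * α * N)‖ = 1 := by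
  rw [show (-2 * π * I * α * N : ℂ) = ((-2 * π * α * N : ℝ) : ℂ) * I by push_cast; ring]
  exact Complex.norm_exp_ofReal_mul_I _

/-- `√(c/x)^r` as a real power -/
lemma sqrt_pow (r : ℕ) (x : ℝ) (hx : 0 < x) : (√(1 / x)) ^ r = x ^ (-(r / 2 : ℝ)) := by
  rw [Real.sqrt_eq_rpow, ← Real.rpow_natCast, ← Real.rpow_mul (by positivity), one_div, Real.inv_rpow hx.le,
    ← Real.rpow_neg hx.le]
  congr 1; ring

lemma Mt_le (A : ℕ) (hA : 0 < A) (b : ℤ) (q : ℕ) [NeZero q] (a : ℤ) (ha : IsUnit (a : ZMod q)) (β : ℝ) (w : ℂ)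
    (hw : 0 < ‖w‖) : ‖Mt A b q a β w‖ ≤ √(2 * π) * √(1 / (‖w‖ * q)) := by
  have hq : 0 < q := Nat.pos_of_ne_zero (NeZero.ne q)
  have hq' : (0:ℝ) < q := by exact_mod_cast hq
  have e : √(2 * π) * √(1 / (‖w‖ * q)) = √(2 * π / (‖w‖ * q)) := by
    rw [← Real.sqrt_mul (by have := Real.pi_pos; positivity), mul_one_div]
  rw [Mt_norm, e, ← sqrt_comb A q hA hq _ hw]
  gcongr
  exact gs_le q a ha A hA _

/-- approximation of Theta by the main term -/
lemma Theta_approx (A : ι → ℕ) (hA : ∀ i, 0 < A i) (b : ι → ℤ) (N : ℤ) (l : ℝ) (hl : 0 < l) (q : ℕ) [NeZero q]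
    (a : ℤ) (ha : IsUnit (a : ZMod q)) (α β : ℝ) (hα : α = β - a / q) (w : ℂ) (hw : w = l + 2 * π * I * β)
    (δ : ℝ) (hδ : ‖w‖ ^ 2 * q ^ 2 / l ≤ δ) :
    ‖Theta A b N l α - cexp (-2 * π * I * α * N) * ∏ i, Mt (A i) (b i) q a β w‖ ≤
      √(2 * π) ^ (Fintype.card ι) * (∏ i, (1 + A i * δ) - 1) * (‖w‖ * q) ^ (-(Fintype.card ι / 2 : ℝ)) := by
  obtain ⟨h1, h2, h3⟩ := w_facts l β hl w hw
  have hq : 0 < q := Nat.pos_of_ne_zero (NeZero.ne q)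
  have hq' : (0:ℝ) < q := by exact_mod_cast hq
  have hpi := Real.pi_pos
  unfold Theta
  rw [← mul_sub, norm_mul, char_norm, one_mul]
  set X := √(2 * π) * √(1 / (‖w‖ * q)) with hX
  have hX' : X = √(2 * π / (‖w‖ * q)) := by
    rw [hX, ← Real.sqrt_mul (by positivity), mul_one_div]
  have := prod_diff Finset.univ (fun i => S (A i) (b i) l α) (fun i => Mt (A i) (b i) q a β w)
    (fun _ => X) (fun i => X * (A i * δ)) (fun i => Mt_le (A i) (hA i) (b i) q a ha β w h3) (fun i => by
      refine (S_approx (A i) (hA i) (b i) l hl q a ha α β hα w hw).trans ?_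
      rw [← hX']
      have : ‖w‖ ^ 2 * (A i) * q ^ 2 / l = A i * (‖w‖ ^ 2 * q ^ 2 / l) := by ring
      rw [this]
      gcongr)
  refine this.trans (le_of_eq ?_)
  have e : ∀ i, X + X * (A i * δ) = X * (1 + A i * δ) := fun i => by ring
  simp_rw [e]
  rw [Finset.prod_mul_distrib, Finset.prod_const, Finset.card_univ, hX, mul_pow, sqrt_pow _ _ (by positivity)]
  ring

/-- trivial bound from approximation -/
lemma Theta_bound (A : ι → ℕ) (hA : ∀ i, 0 < A i) (b : ι → ℤ) (N : ℤ) (l : ℝ) (hl : 0 < l) (q : ℕ) [NeZero q]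
    (a : ℤ) (ha : IsUnit (a : ZMod q)) (α β : ℝ) (hα : α = β - a / q) (w : ℂ) (hw : w = l + 2 * π * I * β)
    (δ : ℝ) (hδ : ‖w‖ ^ 2 * q ^ 2 / l ≤ δ) :
    ‖Theta A b N l α‖ ≤
      √(2 * π) ^ (Fintype.card ι) * (∏ i, (1 + A i * δ)) * (‖w‖ * q) ^ (-(Fintype.card ι / 2 : ℝ)) := by
  obtain ⟨h1, h2, h3⟩ := w_facts l β hl w hw
  have hq : 0 < q := Nat.pos_of_ne_zero (NeZero.ne q)
  have hq' : (0:ℝ) < q := by exact_mod_cast hq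
  have h := Theta_approx A hA b N l hl q a ha α β hα w hw δ hδ
  have h4 : ‖cexp (-2 * π * I * α * N) * ∏ i, Mt (A i) (b i) q a β w‖ ≤
      √(2 * π) ^ (Fintype.card ι) * (‖w‖ * q) ^ (-(Fintype.card ι / 2 : ℝ)) := by
    rw [norm_mul, char_norm, one_mul, norm_prod, ← sqrt_pow _ _ (by positivity), ← mul_pow, ← Finset.card_univ,
      ← Finset.prod_const]
    exact Finset.prod_le_prod (fun _ _ => norm_nonneg _) fun i _ => Mt_le (A i) (hA i) (b i) q a ha β w h3
  have := norm_le_insert' (Theta A b N l α) (cexp (-2 * π * I * α * N) * ∏ i, Mt (A i) (b i) q a β w)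
  linarith

/-- main term bound for `q>1` -/
lemma main_bound (A : ι → ℕ) (hA : ∀ i, 0 < A i) (b : ι → ℤ) (i0 : ι) (P : ℕ)
    (hP : ∀ p : ℕ, p.Prime → (p ≤ P ∨ p ∣ 2 * ∏ i, A i) → p ∣ A i0)
    (hb : IsCoprime (b i0) (A i0 : ℤ)) (q : ℕ) [NeZero q] (hq1 : q ≠ 1)
    (a : ℤ) (ha : IsUnit (a : ZMod q)) (β : ℝ) (w : ℂ) (hw : 0 < ‖w‖) :
    ‖∏ i, Mt (A i) (b i) q a β w‖ ≤
      if P < q then (∏ i, √(π / A i)) * (‖w‖ * q) ^ (-(Fintype.card ι / 2 : ℝ)) else 0 := by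
  classical
  have hq : 0 < q := Nat.pos_of_ne_zero (NeZero.ne q)
  have hq' : (0:ℝ) < q := by exact_mod_cast hq
  by_cases hc : Nat.Coprime q (A i0)
  · have hPq : P < q := by
      by_contra hle
      have hp := Nat.minFac_prime hq1
      have hpq := Nat.minFac_dvd q
      have hpA := hP _ hp (Or.inl ((Nat.le_of_dvd hq hpq).trans (not_lt.1 hle)))
      exact hp.one_lt.ne' (Nat.eq_one_of_dvd_coprimes hc hpq hpA)
    rw [if_pos hPq, norm_prod, ← sqrt_pow _ _ (by positivity), ← Finset.card_univ, ← Finset.prod_const,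
      ← Finset.prod_mul_distrib]
    refine Finset.prod_le_prod (fun _ _ => norm_nonneg _) fun i _ => ?_
    rw [Mt_norm, ← sqrt_comb' (A i) q (hA i) hq _ hw]
    gcongr
    apply gs_le' q a ha
    apply Nat.Coprime.symm
    by_contra hnc
    obtain ⟨p, hp, h1, h2⟩ := Nat.Prime.not_coprime_iff_dvd.1 hnc
    have hpA := hP p hp (Or.inr (h1.trans (Nat.mul_dvd_mul_left 2 (Finset.dvd_prod_of_mem A (Finset.mem_univ i)))))
    exact hp.one_lt.ne' (Nat.eq_one_of_dvd_coprimes hc h2 hpA)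
  · obtain ⟨p, hp, h1, h2⟩ := Nat.Prime.not_coprime_iff_dvd.1 hc
    have hz : Mt (A i0) (b i0) q a β w = 0 := by
      unfold Mt
      rw [gs_zero q a ha (A i0) (b i0) p hp h1 h2]
      · simp
      · intro hpb
        have : IsUnit (p : ℤ) := hb.isUnit_of_dvd' hpb (by exact_mod_cast h2)
        rw [Int.isUnit_iff] at this
        have := hp.one_lt
        omega
    rw [Finset.prod_eq_zero (Finset.mem_univ i0) hz, norm_zero]
    split_ifs
    · positivity
    · exact le_rfl

/-- main term at `q = 1` -/
lemma main_one (A : ι → ℕ) (b : ι → ℤ) (N : ℤ) (β : ℝ) (w : ℂ) :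
    cexp (-2 * π * I * β * N) * ∏ i, Mt (A i) (b i) 1 0 β w =
      ((∏ i, √(π / A i) : ℝ) : ℂ) * (cexp (2 * π * I * β * Del A b N) * (w⁻¹) ^ (((Fintype.card ι / 2 : ℝ)) : ℂ)) := by
  unfold Mt Del
  have hg : ∀ i, gs 1 (((0:ℤ) : ZMod 1) * (A i : ZMod 1)) (((0:ℤ) : ZMod 1) * (b i : ZMod 1)) = 1 := by
    intro i
    unfold gs
    simp
  simp_rw [hg]
  rw [Finset.prod_mul_distrib, Finset.prod_mul_distrib, Finset.prod_mul_distrib, ← Complex.exp_sum, Finset.prod_const, Finset.card_univ,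
    ← Complex.cpow_nat_mul]
  simp only [Nat.cast_one, div_one, Finset.prod_const_one, mul_one]
  push_cast
  have e : (2 * π * I * β * (∑ i, (b i : ℂ) ^ 2 / (4 * A i) - N) : ℂ) = -2 * π * I * β * N + ∑ i, 2 * π * I * β * ((b i : ℂ) ^ 2 / (4 * A i)) := by
    rw [← Finset.mul_sum]; ring
  rw [e, Complex.exp_add, mul_one_div]
  ring

end CM


namespace CM
open Complex Real MeasureTheory Set

variable {ι : Type*} [Fintype ι]

lemma kbound (a l β v : ℝ) (q : ℕ) (hq : 0 < q) (ha : 5 / 2 ≤ a) (hl : 0 < l) (hv : 0 < v) (w : ℂ)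
    (hw : w = l + 2 * π * I * β) (hvw : v * l ≤ ‖w‖) :
    (‖w‖ * q) ^ (-a) ≤ (q : ℝ) ^ (-(5 / 2) : ℝ) * v ^ (-(1 / 2) : ℝ) * (l ^ (2 - a) * (1 / (l ^ 2 + β ^ 2))) := by
  have hq' : (1:ℝ) ≤ q := by exact_mod_cast hq
  have h := w_bound a l β (v * l) ha hl (by positivity) w hw hvw
  obtain ⟨h1, h2, h3⟩ := w_facts l β hl w hw
  rw [Real.mul_rpow h3.le (by positivity)]
  have h4 : (q : ℝ) ^ (-a) ≤ (q : ℝ) ^ (-(5 / 2) : ℝ) := Real.rpow_le_rpow_of_exponent_le hq' (by linarith)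
  have e : l ^ (-(a - 5 / 2)) * (v * l) ^ (-(1 / 2) : ℝ) = v ^ (-(1 / 2) : ℝ) * l ^ (2 - a) := by
    rw [Real.mul_rpow hv.le hl.le, mul_left_comm, ← Real.rpow_add hl]
    congr 2; ring
  rw [e] at h
  calc _ ≤ (v ^ (-(1 / 2) : ℝ) * l ^ (2 - a) * (1 / (l ^ 2 + β ^ 2))) * (q : ℝ) ^ (-(5 / 2) : ℝ) := by
        gcongr
    _ = _ := by ring

noncomputable def coef (P W : ℕ) (Pi0 C1 ε : ℝ) (q : ℕ) : ℝ :=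
  (if P < q then Pi0 else 0) + C1 * (W : ℝ) ^ (-(1 / 2) : ℝ) + (if W < q then C1 else 0) + ε

lemma coef_nonneg (P W : ℕ) (Pi0 C1 ε : ℝ) (q : ℕ) (h1 : 0 ≤ Pi0) (h2 : 0 ≤ C1) (h3 : 0 ≤ ε) :
    0 ≤ coef P W Pi0 C1 ε q := by
  unfold coef; split_ifs <;> positivity

noncomputable def dsum (a l : ℝ) (n0 : ℕ) (c : ℕ → ℝ) (α : ℝ) : ℝ :=
  ∑ q ∈ Finset.Icc 1 n0, ∑ k ∈ Finset.Icc (-(q:ℤ)) q,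
    c q * (q : ℝ) ^ (-(5 / 2) : ℝ) * (l ^ (2 - a) * (1 / (l ^ 2 + (α - k / q) ^ 2)))

lemma le_dsum (a l : ℝ) (hl : 0 < l) (n0 : ℕ) (c : ℕ → ℝ) (hc : ∀ q, 0 ≤ c q) (α : ℝ) (q : ℕ) (k : ℤ)
    (hq : q ∈ Finset.Icc 1 n0) (hk : k ∈ Finset.Icc (-(q:ℤ)) q) :
    c q * (q : ℝ) ^ (-(5 / 2) : ℝ) * (l ^ (2 - a) * (1 / (l ^ 2 + (α - k / q) ^ 2))) ≤ dsum a l n0 c α := by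
  unfold dsum
  have h1 : ∀ q : ℕ, ∀ k : ℤ, 0 ≤ c q * (q : ℝ) ^ (-(5 / 2) : ℝ) * (l ^ (2 - a) * (1 / (l ^ 2 + (α - k / q) ^ 2))) := by
    intro q k; have := hc q; positivity
  refine le_trans ?_ (Finset.single_le_sum (f := fun q : ℕ => ∑ k ∈ Finset.Icc (-(q:ℤ)) q,
    c q * (q : ℝ) ^ (-(5 / 2) : ℝ) * (l ^ (2 - a) * (1 / (l ^ 2 + (α - k / q) ^ 2)))) (fun q _ => Finset.sum_nonneg fun k _ => h1 q k) hq)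
  exact Finset.single_le_sum (f := fun k : ℤ => c q * (q : ℝ) ^ (-(5 / 2) : ℝ) * (l ^ (2 - a) * (1 / (l ^ 2 + (α - k / q) ^ 2)))) (fun k _ => h1 q k) hk

lemma hDaux (l β n0 q : ℝ) (hl : 0 < l) (hn : 0 ≤ n0) (hq : 0 ≤ q) (hn1 : n0 ^ 2 * l ≤ 1) (hn2 : 1 ≤ (n0 + 1) ^ 2 * l)
    (hb : |β| * ((n0 + 1) * q) ≤ 1) (hqn : q ≤ n0) : (l ^ 2 + (2 * π * β) ^ 2) * q ^ 2 ≤ 41 * l := by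
  have hb2 : (β ^ 2 * q ^ 2) * (n0 + 1) ^ 2 ≤ 1 := by
    have : (|β| * ((n0 + 1) * q)) ^ 2 ≤ 1 := by
      rw [sq_le_one_iff₀ (by positivity)]; exact hb
    rw [mul_pow, sq_abs] at this
    linarith
  have hb3 : β ^ 2 * q ^ 2 ≤ l := by
    calc β ^ 2 * q ^ 2 = (β ^ 2 * q ^ 2) * 1 := by ring
      _ ≤ (β ^ 2 * q ^ 2) * ((n0 + 1) ^ 2 * l) := by gcongr
      _ = (β ^ 2 * q ^ 2) * (n0 + 1) ^ 2 * l := by ring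
      _ ≤ 1 * l := by gcongr
      _ = l := one_mul l
  have hq2 : q ^ 2 * l ≤ 1 := le_trans (by gcongr) hn1
  have hpi2 : π ^ 2 ≤ 10 := by nlinarith only [Real.pi_lt_d2, Real.pi_gt_three]
  calc (l ^ 2 + (2 * π * β) ^ 2) * q ^ 2 = (q ^ 2 * l) * l + 4 * π ^ 2 * (β ^ 2 * q ^ 2) := by ring
    _ ≤ 1 * l + 4 * 10 * l := by gcongr
    _ = 41 * l := by ring

set_option maxHeartbeats 1000000 in
lemma pointwise (A : ι → ℕ) (hA : ∀ i, 0 < A i) (i0 : ι) (P : ℕ)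
    (hP : ∀ p : ℕ, p.Prime → (p ≤ P ∨ p ∣ 2 * ∏ i, A i) → p ∣ A i0)
    (hr : 5 ≤ Fintype.card ι) (b : ι → ℤ) (N : ℤ)
    (hb : IsCoprime (b i0) (A i0 : ℤ)) (l : ℝ) (hl : 0 < l) (W : ℕ) (hW : 1 ≤ W) (hWl : W * l < 1 / 2)
    (n0 : ℕ) (hn0 : 1 ≤ n0) (hn1 : (n0 : ℝ) ^ 2 * l ≤ 1) (hn2 : 1 ≤ ((n0 : ℝ) + 1) ^ 2 * l) (ε : ℝ)
    (hε : √(2 * π) ^ (Fintype.card ι) * (∏ i, (1 + A i * ((1 + 4 * π ^ 2 * W ^ 2) * W ^ 2 * l)) - 1) ≤ ε)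
    (α : ℝ) (hα : |α| ≤ 1 / 2) :
    ‖Theta A b N l α - (if |α| ≤ W * l then ((∏ i, √(π / A i) : ℝ) : ℂ) * 
      (cexp (2 * π * I * α * Del A b N) * ((l + 2 * π * I * α : ℂ)⁻¹) ^ (((Fintype.card ι / 2 : ℝ)) : ℂ)) else 0)‖ ≤
    dsum (Fintype.card ι / 2 : ℝ) l n0 
      (coef P W (∏ i, √(π / A i)) (√(2 * π) ^ (Fintype.card ι) * (∏ i, (1 + A i * (41:ℝ)))) ε) α := by
  have hpi := Real.pi_pos
  have hW' : (1:ℝ) ≤ W := by exact_mod_cast hW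
  have ha : (5 / 2 : ℝ) ≤ Fintype.card ι / 2 := by
    have : (5:ℝ) ≤ Fintype.card ι := by exact_mod_cast hr
    linarith
  set a : ℝ := (Fintype.card ι / 2 : ℝ) with hadef
  set Pi0 : ℝ := ∏ i, √(π / A i) with hPi0
  set C1 : ℝ := √(2 * π) ^ (Fintype.card ι) * (∏ i, (1 + A i * (41:ℝ))) with hC1
  have hPi0n : 0 ≤ Pi0 := Finset.prod_nonneg fun _ _ => Real.sqrt_nonneg _
  have hC1n : 0 ≤ C1 := by positivity
  have hε0 : 0 ≤ ε := by
    refine le_trans (mul_nonneg (by positivity) ?_) hε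
    rw [sub_nonneg]
    calc (1:ℝ) = ∏ _i : ι, (1:ℝ) := by simp
      _ ≤ _ := by
        refine Finset.prod_le_prod (fun _ _ => zero_le_one) fun i _ => ?_
        have : 0 ≤ (A i : ℝ) * ((1 + 4 * π ^ 2 * W ^ 2) * W ^ 2 * l) := by positivity
        linarith
  have hcn := fun q => coef_nonneg P W Pi0 C1 ε q hPi0n hC1n hε0
  have hWneg : 0 ≤ C1 * (W : ℝ) ^ (-(1 / 2) : ℝ) := by positivity
  -- the small-w bound
  have hδ : ∀ (q : ℕ) (β : ℝ) (w : ℂ), q ≤ W → |β| ≤ W * l → w = l + 2 * π * I * β →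
      ‖w‖ ^ 2 * q ^ 2 / l ≤ (1 + 4 * π ^ 2 * W ^ 2) * W ^ 2 * l := by
    intro q β w hq hβ hw
    rw [(w_facts l β hl w hw).2.1, div_le_iff₀ hl]
    have hq' : (q:ℝ) ≤ W := by exact_mod_cast hq
    have h1 : β ^ 2 ≤ (W * l) ^ 2 := sq_le_sq' (by linarith [(abs_le.1 hβ).1]) (abs_le.1 hβ).2
    have h2 : (q:ℝ) ^ 2 ≤ W ^ 2 := by gcongr
    calc (l ^ 2 + (2 * π * β) ^ 2) * q ^ 2 = (l ^ 2 + 4 * π ^ 2 * β ^ 2) * q ^ 2 := by ring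
      _ ≤ (l ^ 2 + 4 * π ^ 2 * (W * l) ^ 2) * W ^ 2 := by gcongr
      _ = _ := by ring
  have hlw : ∀ (β : ℝ) (w : ℂ), w = l + 2 * π * I * β → 1 * l ≤ ‖w‖ := by
    intro β w hw
    have h1 := (w_facts l β hl w hw).1
    have := Complex.abs_re_le_norm w
    rw [h1] at this
    rw [one_mul]
    exact (le_abs_self _).trans this
  by_cases hmaj : |α| ≤ W * l
  · rw [if_pos hmaj, ← main_one]
    have : NeZero (1:ℕ) := ⟨one_ne_zero⟩
    have h1 := Theta_approx A hA b N l hl 1 0 (isUnit_of_subsingleton _) α α (by simp) _ rfl _ (hδ 1 α _ hW hmaj rfl)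
    refine h1.trans ?_
    have h2 := kbound a l α 1 1 one_pos ha hl one_pos _ rfl (hlw α _ rfl)
    refine le_trans ?_ (le_dsum a l hl n0 _ hcn α 1 0 (by simp [hn0]) (by simp))
    rw [← hadef]
    simp only [Real.one_rpow, mul_one, Nat.cast_one, one_mul, Int.cast_zero, zero_div, sub_zero] at h2 ⊢
    refine mul_le_mul (hε.trans ?_) h2 (by positivity) (hcn 1)
    unfold coef
    split_ifs <;> linarith
  · rw [if_neg hmaj, sub_zero]
    push Not at hmaj
    obtain ⟨x, hx1, hx2⟩ := Real.exists_rat_abs_sub_le_and_den_le α (n := n0) (by omega)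
    set q := x.den with hq
    have hqpos : 0 < q := x.den_pos
    have : NeZero q := ⟨hqpos.ne'⟩
    have hq' : (1:ℝ) ≤ q := by exact_mod_cast hqpos
    set β := α - x with hβ
    have hxd : (x : ℝ) = x.num / q := by
      conv_lhs => rw [← Rat.num_div_den x]
      push_cast; rfl
    have hαβ : α = β - ((-x.num : ℤ) : ℝ) / q := by rw [hβ, hxd]; push_cast; ring
    have hunit : IsUnit (((-x.num : ℤ)) : ZMod q) := by
      push_cast
      rw [IsUnit.neg_iff, ZMod.coe_int_isUnit_iff_isCoprime]
      rw [Int.isCoprime_iff_gcd_eq_one]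
      have := x.reduced
      rw [Int.gcd_comm]
      simpa [Int.gcd, Nat.Coprime] using this
    have hkmem : x.num ∈ Finset.Icc (-(q:ℤ)) q := by
      have hb : |β| * ((n0 + 1) * q) ≤ 1 := by
        rw [le_div_iff₀ (by positivity)] at hx1; exact hx1
      have hn0' : (1:ℝ) ≤ n0 := by exact_mod_cast hn0
      have h1 : |β| ≤ 1 / 2 := by
        have : 2 ≤ ((n0:ℝ) + 1) * q := by nlinarith only [hn0', hq']
        nlinarith only [abs_nonneg β, this, hb]
      have h2 : |(x : ℝ)| ≤ 1 := by
        have : (x : ℝ) = α - β := by rw [hβ]; ring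
        rw [this]
        exact (abs_sub _ _).trans (by linarith)
      rw [hxd, abs_div, div_le_one (by positivity), Nat.abs_cast] at h2
      rw [Finset.mem_Icc, ← abs_le]
      exact_mod_cast h2
    have hqmem : q ∈ Finset.Icc 1 n0 := Finset.mem_Icc.2 ⟨hqpos, hx2⟩
    refine le_trans ?_ (le_dsum a l hl n0 _ hcn α q x.num hqmem hkmem)
    rw [← hxd, ← hβ]
    set w : ℂ := l + 2 * π * I * β with hw
    have hk1 := kbound a l β 1 q hqpos ha hl one_pos w hw (hlw β w hw)
    simp only [Real.one_rpow, mul_one] at hk1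
    have hKn : 0 ≤ l ^ (2 - a) * (1 / (l ^ 2 + β ^ 2)) := by positivity
    have hD : ‖w‖ ^ 2 * q ^ 2 / l ≤ 41 := by
      have hb : |β| * ((n0 + 1) * q) ≤ 1 := by
        rw [le_div_iff₀ (by positivity)] at hx1; exact hx1
      have hqn : (q:ℝ) ≤ n0 := by exact_mod_cast hx2
      rw [(w_facts l β hl w hw).2.1, div_le_iff₀ hl]
      exact hDaux l β n0 q hl (by positivity) (by positivity) hn1 hn2 hb hqn
    have htriv := Theta_bound A hA b N l hl q _ hunit α β hαβ w hw 41 hD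
    rw [← hC1, ← hadef] at htriv
    by_cases hqW : W < q
    · refine htriv.trans ?_
      rw [mul_assoc (coef P W Pi0 C1 ε q)]
      refine mul_le_mul ?_ hk1 (by positivity) (hcn q)
      unfold coef
      rw [if_pos hqW]
      split_ifs <;> linarith
    · push Not at hqW
      by_cases hβW : |β| ≤ W * l
      · -- major arc with q > 1
        have hq1 : q ≠ 1 := by
          intro hq1
          rw [hq1] at hxd
          simp only [Nat.cast_one, div_one] at hxd
          have h2 : |(x : ℝ)| < 1 := by
            have : (x : ℝ) = α - β := by rw [hβ]; ring
            rw [this]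
            exact lt_of_le_of_lt (abs_sub _ _) (by linarith)
          rw [hxd] at h2
          have h3 : |x.num| < 1 := by exact_mod_cast h2
          have h4 : x.num = 0 := Int.abs_lt_one_iff.1 h3
          rw [h4] at hxd
          have : β = α := by rw [hβ, hxd]; simp
          rw [this] at hβW
          linarith
        have h1 := Theta_approx A hA b N l hl q _ hunit α β hαβ w hw _ (hδ q β w hqW hβW hw)
        have h2 := main_bound A hA b i0 P hP hb q hq1 _ hunit β w (w_facts l β hl w hw).2.2
        have h3 := norm_le_insert' (Theta A b N l α) (cexp (-2 * π * I * α * N) * ∏ i, Mt (A i) (b i) q (-x.num) β w)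
        rw [norm_mul, char_norm, one_mul] at h3
        rw [← hadef] at h1 h2
        rw [mul_assoc]
        have hn : 0 ≤ (‖w‖ * q) ^ (-a) := by positivity
        have h5 : ‖Theta A b N l α‖ ≤ ((if P < q then Pi0 else 0) + ε) * (‖w‖ * q) ^ (-a) := by
          have := mul_le_mul_of_nonneg_right hε hn
          refine h3.trans ((add_le_add h2 h1).trans ?_)
          rw [add_mul (if P < q then Pi0 else 0)]
          refine add_le_add ?_ this
          split_ifs
          · exact le_rfl
          · simp
        refine h5.trans ?_
        refine mul_le_mul ?_ hk1 hn (hcn q)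
        unfold coef
        rw [if_neg (not_lt.2 hqW)]
        linarith
      · push Not at hβW
        have hWw : (W:ℝ) * l ≤ ‖w‖ := by
          have him : w.im = 2 * π * β := by rw [hw]; simp
          have := Complex.abs_im_le_norm w
          rw [him, abs_mul, abs_of_pos (by positivity)] at this
          have h7 : |β| * 1 ≤ |β| * (2 * π) := mul_le_mul_of_nonneg_left (by linarith [Real.pi_gt_three]) (abs_nonneg β)
          linarith
        have hk2 := kbound a l β W q hqpos ha hl (by linarith) w hw hWw
        refine htriv.trans ?_
        refine (mul_le_mul_of_nonneg_left hk2 hC1n).trans ?_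
        have : C1 * ((q : ℝ) ^ (-(5 / 2) : ℝ) * (W:ℝ) ^ (-(1 / 2) : ℝ) * (l ^ (2 - a) * (1 / (l ^ 2 + β ^ 2)))) =
          C1 * (W:ℝ) ^ (-(1 / 2) : ℝ) * (q : ℝ) ^ (-(5 / 2) : ℝ) * (l ^ (2 - a) * (1 / (l ^ 2 + β ^ 2))) := by ring
        rw [this]
        gcongr
        unfold coef
        split_ifs <;> linarith

end CM


namespace CM
open Complex Real MeasureTheory Set

lemma zsum : Summable (fun q : ℕ => (q : ℝ) ^ (-(3 / 2) : ℝ)) :=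
  Real.summable_nat_rpow.2 (by norm_num)

lemma zeta_bd : ∃ Z > (0:ℝ), ∀ n0 : ℕ, ∑ q ∈ Finset.Icc 1 n0, (q : ℝ) ^ (-(3 / 2) : ℝ) ≤ Z := by
  refine ⟨(∑' q : ℕ, (q : ℝ) ^ (-(3 / 2) : ℝ)) + 1, ?_, fun n0 => ?_⟩
  · have : 0 ≤ ∑' q : ℕ, (q : ℝ) ^ (-(3 / 2) : ℝ) := tsum_nonneg fun q => by positivity
    linarith
  · have := zsum.sum_le_tsum (Finset.Icc 1 n0) (fun q _ => by positivity)
    linarith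

lemma zeta_tail (ε : ℝ) (hε : 0 < ε) : ∃ P : ℕ, ∀ P' : ℕ, P ≤ P' → ∀ n0 : ℕ,
    ∑ q ∈ Finset.Icc 1 n0, (if P' < q then (q : ℝ) ^ (-(3 / 2) : ℝ) else 0) ≤ ε := by
  obtain ⟨s, hs⟩ := summable_iff_vanishing_norm.1 zsum ε hε
  refine ⟨s.sup id, fun P' hP' n0 => ?_⟩
  rw [← Finset.sum_filter]
  refine (le_abs_self _).trans (hs _ ?_).le
  rw [Finset.disjoint_left]
  intro q hq hqs
  rw [Finset.mem_filter] at hq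
  have : id q ≤ s.sup id := Finset.le_sup hqs
  simp only [id] at this
  omega

lemma K_trans (l x : ℝ) (hl : 0 < l) : Integrable (fun α : ℝ => 1 / (l ^ 2 + (α - x) ^ 2)) ∧
    ∫ α : ℝ, 1 / (l ^ 2 + (α - x) ^ 2) = π / l := by
  obtain ⟨h1, h2⟩ := K_facts l hl
  exact ⟨h1.comp_sub_right x, by rw [← h2]; exact integral_sub_right_eq_self (fun β : ℝ => 1 / (l ^ 2 + β ^ 2)) x⟩

lemma dsum_integrable (a l : ℝ) (hl : 0 < l) (n0 : ℕ) (c : ℕ → ℝ) : Integrable (dsum a l n0 c) := by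
  unfold dsum
  refine integrable_finsetSum _ fun q _ => integrable_finsetSum _ fun k _ => ?_
  exact ((K_trans l _ hl).1.const_mul _).const_mul _

lemma dsum_int (a l : ℝ) (hl : 0 < l) (n0 : ℕ) (c : ℕ → ℝ) (hc : ∀ q, 0 ≤ c q) :
    ∫ α in Ioc (-(1/2):ℝ) (1/2), dsum a l n0 c α ≤ 3 * π * l ^ (1 - a) * ∑ q ∈ Finset.Icc 1 n0, c q * (q : ℝ) ^ (-(3 / 2) : ℝ) := by
  have h0 : ∫ α in Ioc (-(1/2):ℝ) (1/2), dsum a l n0 c α ≤ ∫ α, dsum a l n0 c α := by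
    refine setIntegral_le_integral (dsum_integrable a l hl n0 c) (Filter.Eventually.of_forall fun α => ?_)
    refine Finset.sum_nonneg fun q _ => Finset.sum_nonneg fun k _ => ?_
    have := hc q
    positivity
  refine h0.trans ?_
  unfold dsum
  rw [integral_finsetSum _ fun q _ => integrable_finsetSum _ fun k _ => ((K_trans l _ hl).1.const_mul _).const_mul _,
    Finset.mul_sum]
  refine Finset.sum_le_sum fun q hq => ?_
  rw [integral_finsetSum _ fun k _ => ((K_trans l _ hl).1.const_mul _).const_mul _]
  simp_rw [integral_const_mul, (K_trans l _ hl).2]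
  rw [Finset.sum_const, Int.card_Icc, nsmul_eq_mul]
  have hq1 : 1 ≤ q := (Finset.mem_Icc.1 hq).1
  have hq' : (1:ℝ) ≤ q := by exact_mod_cast hq1
  have e1 : (((q:ℤ) + 1 - -(q:ℤ)).toNat : ℝ) = 2 * q + 1 := by
    have : ((q:ℤ) + 1 - -(q:ℤ)).toNat = 2 * q + 1 := by omega
    rw [this]; push_cast; ring
  rw [e1]
  have e2 : l ^ (2 - a) * (π / l) = π * l ^ (1 - a) := by
    rw [show (2 - a) = (1 - a) + 1 by ring, Real.rpow_add hl, Real.rpow_one]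
    field_simp
  have e3 : (q:ℝ) ^ (-(3/2) : ℝ) = q * (q:ℝ) ^ (-(5/2) : ℝ) := by
    rw [show (-(3/2) : ℝ) = 1 + -(5/2) by norm_num, Real.rpow_add (by linarith), Real.rpow_one]
  rw [e2, e3]
  have := hc q
  have := Real.pi_pos
  calc (2 * (q:ℝ) + 1) * (c q * (q:ℝ) ^ (-(5/2) : ℝ) * (π * l ^ (1 - a))) ≤ (3 * q) * (c q * (q:ℝ) ^ (-(5/2) : ℝ) * (π * l ^ (1 - a))) := by
        gcongr; linarith
    _ = _ := by ring

lemma coef_sum (P W : ℕ) (Pi0 C1 ε Z T1 T2 : ℝ) (n0 : ℕ) (h1 : 0 ≤ Pi0) (h2 : 0 ≤ C1) (h3 : 0 ≤ ε)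
    (hZ : ∑ q ∈ Finset.Icc 1 n0, (q : ℝ) ^ (-(3 / 2) : ℝ) ≤ Z)
    (hT1 : ∑ q ∈ Finset.Icc 1 n0, (if P < q then (q : ℝ) ^ (-(3 / 2) : ℝ) else 0) ≤ T1)
    (hT2 : ∑ q ∈ Finset.Icc 1 n0, (if W < q then (q : ℝ) ^ (-(3 / 2) : ℝ) else 0) ≤ T2) :
    ∑ q ∈ Finset.Icc 1 n0, coef P W Pi0 C1 ε q * (q : ℝ) ^ (-(3 / 2) : ℝ) ≤
      Pi0 * T1 + C1 * (W : ℝ) ^ (-(1 / 2) : ℝ) * Z + C1 * T2 + ε * Z := by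
  have e : ∀ q : ℕ, coef P W Pi0 C1 ε q * (q : ℝ) ^ (-(3 / 2) : ℝ) =
      Pi0 * (if P < q then (q : ℝ) ^ (-(3 / 2) : ℝ) else 0) + C1 * (W : ℝ) ^ (-(1 / 2) : ℝ) * (q : ℝ) ^ (-(3 / 2) : ℝ) +
      C1 * (if W < q then (q : ℝ) ^ (-(3 / 2) : ℝ) else 0) + ε * (q : ℝ) ^ (-(3 / 2) : ℝ) := by
    intro q; unfold coef; split_ifs <;> ring
  simp_rw [e]
  rw [Finset.sum_add_distrib, Finset.sum_add_distrib, Finset.sum_add_distrib, ← Finset.mul_sum, ← Finset.mul_sum,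
    ← Finset.mul_sum, ← Finset.mul_sum]
  gcongr

lemma main_int (a l D : ℝ) (W : ℕ) (ha : 5 / 2 ≤ a) (hl : 0 < l) (hD : 0 < D) (hW : 1 ≤ W) (hWl : W * l < 1 / 2) :
    IntegrableOn (fun α : ℝ => if |α| ≤ W * l then cexp (2 * π * I * α * D) * ((l + 2 * π * I * α : ℂ)⁻¹) ^ (a : ℂ) else 0) (Ioc (-(1/2):ℝ) (1/2)) ∧
    ‖(∫ α in Ioc (-(1/2):ℝ) (1/2), (if |α| ≤ W * l then cexp (2 * π * I * α * D) * ((l + 2 * π * I * α : ℂ)⁻¹) ^ (a : ℂ) else 0)) -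
      ((D ^ (a - 1) * Real.exp (-l * D) / Real.Gamma a : ℝ) : ℂ)‖ ≤ π * (W : ℝ) ^ (-(1 / 2) : ℝ) * l ^ (1 - a) := by
  set f : ℝ → ℂ := fun α => cexp (2 * π * I * α * D) * ((l + 2 * π * I * α : ℂ)⁻¹) ^ (a : ℂ) with hf
  have hnf : ∀ α, ‖f α‖ = ‖(l + 2 * π * I * α : ℂ)‖ ^ (-a) := by
    intro α
    rw [hf]; simp only
    rw [norm_mul, winv_norm, show (2 * π * I * α * D : ℂ) = ((2 * π * α * D : ℝ) : ℂ) * I by push_cast; ring,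
      Complex.norm_exp_ofReal_mul_I, one_mul]
  have hfi : Integrable f := by
    refine (winv_integrable a l ha hl).mono (Continuous.aestronglyMeasurable ?_) (Filter.Eventually.of_forall fun α => ?_)
    · exact Continuous.mul (by fun_prop) (winv_cont a l hl)
    · rw [hnf, winv_norm]
  have hms : MeasurableSet {α : ℝ | |α| ≤ W * l} := measurableSet_le (by fun_prop) measurable_const
  have hite : (fun α : ℝ => if |α| ≤ W * l then f α else 0) = {α : ℝ | |α| ≤ W * l}.indicator f := by
    ext α; simp [Set.indicator]
  have hii : Integrable (fun α : ℝ => if |α| ≤ W * l then f α else 0) := by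
    rw [hite]; exact hfi.indicator hms
  refine ⟨hii.integrableOn, ?_⟩
  have h1 : ∫ α in Ioc (-(1/2):ℝ) (1/2), (if |α| ≤ W * l then f α else 0) = ∫ α, (if |α| ≤ W * l then f α else 0) := by
    refine setIntegral_eq_integral_of_forall_compl_eq_zero fun α hα => ?_
    rw [if_neg]
    intro h
    apply hα
    rw [abs_le] at h
    constructor <;> linarith [h.1, h.2]
  rw [h1, ← J_inf a l D ha hl hD]
  change ‖_ - ∫ β, f β‖ ≤ _
  rw [← integral_sub hii hfi]
  have hpi := Real.pi_gt_three
  have hW' : (1:ℝ) ≤ W := by exact_mod_cast hW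
  have h2 : ∀ α : ℝ, ‖(if |α| ≤ W * l then f α else 0) - f α‖ ≤ ((W : ℝ) ^ (-(1 / 2) : ℝ) * l ^ (2 - a)) * (1 / (l ^ 2 + α ^ 2)) := by
    intro α
    split_ifs with h
    · rw [sub_self, norm_zero]; positivity
    · rw [zero_sub, norm_neg, hnf]
      push Not at h
      have hk := kbound a l α W 1 one_pos ha hl (by linarith) _ rfl (by
        have him : (l + 2 * π * I * α : ℂ).im = 2 * π * α := by simp
        have := Complex.abs_im_le_norm (l + 2 * π * I * α : ℂ)
        rw [him, abs_mul, abs_of_pos (by positivity)] at this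
        have h7 : |α| * 1 ≤ |α| * (2 * π) := mul_le_mul_of_nonneg_left (by linarith) (abs_nonneg α)
        linarith)
      simp only [Nat.cast_one, mul_one, Real.one_rpow, one_mul] at hk
      exact hk.trans (le_of_eq (by ring))
  refine (norm_integral_le_of_norm_le ((K_facts l hl).1.const_mul _) (Filter.Eventually.of_forall h2)).trans (le_of_eq ?_)
  rw [integral_const_mul, (K_facts l hl).2]
  have e2 : l ^ (2 - a) * (π / l) = π * l ^ (1 - a) := by
    rw [show (2 - a) = (1 - a) + 1 by ring, Real.rpow_add hl, Real.rpow_one]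
    field_simp
  rw [mul_assoc, e2]; ring

end CM


namespace CM
open Complex Real MeasureTheory Set

set_option maxHeartbeats 1000000 in
theorem CT (r : ℕ) (hr : 5 ≤ r) : ∃ P : ℕ, ∀ (A : Fin r → ℕ) (_ : ∀ i, 0 < A i) (i0 : Fin r)
    (_ : ∀ p : ℕ, p.Prime → (p ≤ P ∨ p ∣ 2 * ∏ i, A i) → p ∣ A i0),
    ∃ c > (0:ℝ), ∃ D0 : ℝ, ∀ (b : Fin r → ℤ) (N : ℤ), IsCoprime (b i0) (A i0 : ℤ) → D0 ≤ Del A b N →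
      c * (Del A b N) ^ ((r:ℝ) / 2 - 1) ≤ (sol A b N).ncard := by
  have hpi := Real.pi_pos
  have hr' : (5:ℝ) ≤ r := by exact_mod_cast hr
  set a : ℝ := (r:ℝ) / 2 with hadef
  have ha : 5 / 2 ≤ a := by rw [hadef]; linarith
  have hG : 0 < Real.Gamma a := Real.Gamma_pos_of_pos (by linarith)
  set g : ℝ := Real.exp (-1) / Real.Gamma a with hg
  have hgpos : 0 < g := by positivity
  obtain ⟨Z, hZ, hZs⟩ := zeta_bd
  obtain ⟨P, hPt⟩ := zeta_tail (g / 4 / (3 * π)) (by positivity)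
  refine ⟨P, fun A hA i0 hP => ?_⟩
  set Pi0 : ℝ := ∏ i, √(π / A i) with hPi0
  have hPi0p : 0 < Pi0 := by
    refine Finset.prod_pos fun i _ => Real.sqrt_pos.2 ?_
    have : (0:ℝ) < A i := by exact_mod_cast hA i
    positivity
  set C1 : ℝ := √(2 * π) ^ (Fintype.card (Fin r)) * (∏ i, (1 + A i * (41:ℝ))) with hC1
  have hC1p : 0 < C1 := by positivity
  -- choice of W
  obtain ⟨W1, hW1⟩ := zeta_tail (Pi0 * g / 8 / (3 * π * C1)) (by positivity)
  have hWlim : Filter.Tendsto (fun W : ℕ => (Pi0 * π + 3 * π * C1 * Z) * (W : ℝ) ^ (-(1 / 2) : ℝ)) Filter.atTop (nhds 0) := by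
    have := ((tendsto_rpow_neg_atTop (y := 1 / 2) (by norm_num)).comp tendsto_natCast_atTop_atTop).const_mul (Pi0 * π + 3 * π * C1 * Z)
    rw [mul_zero] at this
    exact this
  obtain ⟨W, hWa, hWb, hWc⟩ := ((hWlim.eventually_le_const (u := Pi0 * g / 8) (by positivity)).and
    ((Filter.eventually_ge_atTop W1).and (Filter.eventually_ge_atTop 1))).exists
  -- choice of l0
  set eps : ℝ → ℝ := fun l => √(2 * π) ^ (Fintype.card (Fin r)) * (∏ i, (1 + A i * ((1 + 4 * π ^ 2 * W ^ 2) * W ^ 2 * l)) - 1) with heps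
  have hlim : Filter.Tendsto (fun l : ℝ => 3 * π * Z * eps l) (nhds 0) (nhds 0) := by
    have hc : Continuous (fun l : ℝ => 3 * π * Z * eps l) := by rw [heps]; fun_prop
    have := hc.tendsto 0
    simpa [heps] using this
  have hlim2 : Filter.Tendsto (fun l : ℝ => (W:ℝ) * l) (nhds 0) (nhds 0) := by
    have hc : Continuous (fun l : ℝ => (W:ℝ) * l) := by fun_prop
    simpa using hc.tendsto 0
  have hlim3 : Filter.Tendsto (fun D : ℝ => 1 / D) Filter.atTop (nhds 0) := by
    simpa using tendsto_inv_atTop_zero (𝕜 := ℝ)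
  have hev := (((hlim.comp hlim3).eventually_le_const (u := Pi0 * g / 4) (by positivity)).and
    ((hlim2.comp hlim3).eventually_lt_const (u := 1 / 2) (by norm_num))).and (Filter.eventually_ge_atTop 1)
  obtain ⟨D0, hD0⟩ := Filter.eventually_atTop.1 hev
  refine ⟨Pi0 * g / 4 * Real.exp 1, by positivity, D0, fun b N hb hD => ?_⟩
  set D := Del A b N with hDdef
  obtain ⟨⟨hl1, hl2⟩, hD1⟩ := hD0 D hD
  simp only [Function.comp] at hl1 hl2
  have hDp : 0 < D := by linarith
  set l := 1 / D with hl
  have hlp : 0 < l := by positivity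
  have hlD : l * D = 1 := by rw [hl]; field_simp
  set n0 := ⌊√D⌋₊ with hn0
  have hsD : √D ^ 2 = D := Real.sq_sqrt hDp.le
  have hn0a : 1 ≤ n0 := by
    rw [hn0, Nat.one_le_floor_iff]; exact Real.one_le_sqrt.2 hD1
  have hn0b : (n0:ℝ) ^ 2 * l ≤ 1 := by
    have h1 : (n0:ℝ) ≤ √D := Nat.floor_le (Real.sqrt_nonneg _)
    calc (n0:ℝ) ^ 2 * l ≤ √D ^ 2 * l := by gcongr
      _ = 1 := by rw [hsD, mul_comm]; exact hlD
  have hn0c : 1 ≤ ((n0:ℝ) + 1) ^ 2 * l := by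
    have h1 : √D ≤ (n0:ℝ) + 1 := (Nat.lt_floor_add_one _).le
    calc (1:ℝ) = √D ^ 2 * l := by rw [hsD, mul_comm]; exact hlD.symm
      _ ≤ ((n0:ℝ) + 1) ^ 2 * l := by gcongr
  have hcard : (Fintype.card (Fin r) : ℝ) / 2 = a := by rw [Fintype.card_fin]
  have hpt := pointwise A hA i0 P hP (by simpa using hr) b N hb l hlp W hWc hl2 n0 hn0a hn0b hn0c (eps l) le_rfl
  rw [hcard] at hpt
  have hε0 : 0 ≤ eps l := by
    refine mul_nonneg (by positivity) ?_
    rw [sub_nonneg]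
    calc (1:ℝ) = ∏ _i : Fin r, (1:ℝ) := by simp
      _ ≤ _ := by
        refine Finset.prod_le_prod (fun _ _ => zero_le_one) fun i _ => ?_
        have : 0 ≤ (A i : ℝ) * ((1 + 4 * π ^ 2 * W ^ 2) * W ^ 2 * l) := by positivity
        linarith
  have hcn := fun q => coef_nonneg P W Pi0 C1 (eps l) q hPi0p.le hC1p.le hε0
  obtain ⟨hmi, hmn⟩ := main_int a l D W ha hlp hDp hWc hl2
  set M : ℝ → ℂ := fun α => if |α| ≤ W * l then cexp (2 * π * I * α * D) * ((l + 2 * π * I * α : ℂ)⁻¹) ^ (a : ℂ) else 0 with hM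
  have hTi : IntegrableOn (Theta A b N l) (Ioc (-(1/2):ℝ) (1/2)) :=
    ((Theta_cont A hA b N l hlp).integrableOn_Icc (a := -(1/2)) (b := 1/2)).mono_set Ioc_subset_Icc_self
  have hdiff : ‖(∫ α in Ioc (-(1/2):ℝ) (1/2), Theta A b N l α) - (Pi0 : ℂ) * ∫ α in Ioc (-(1/2):ℝ) (1/2), M α‖ ≤
      3 * π * l ^ (1 - a) * ∑ q ∈ Finset.Icc 1 n0, coef P W Pi0 C1 (eps l) q * (q : ℝ) ^ (-(3 / 2) : ℝ) := by
    rw [← integral_const_mul, ← integral_sub hTi (hmi.const_mul _)]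
    refine le_trans ?_ (dsum_int a l hlp n0 _ hcn)
    refine norm_integral_le_of_norm_le (dsum_integrable a l hlp n0 _).integrableOn ?_
    refine (ae_restrict_iff' measurableSet_Ioc).2 (Filter.Eventually.of_forall fun α hα => ?_)
    have h := hpt α (abs_le.2 ⟨hα.1.le, hα.2⟩)
    refine le_trans (le_of_eq ?_) h
    congr 2
    rw [hM]; simp only
    split_ifs
    · rfl
    · rw [mul_zero]
  have hcs := coef_sum P W Pi0 C1 (eps l) Z _ _ n0 hPi0p.le hC1p.le hε0 (hZs n0) (hPt P le_rfl n0) (hW1 W hWb n0)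
  have hTint := Theta_int A hA b N l (-(1/2)) hlp
  rw [show (-(1/2) + 1 : ℝ) = 1/2 by norm_num, intervalIntegral.integral_of_le (by norm_num), ← hDdef,
    show -l * D = -1 by linarith] at hTint
  have hJ : D ^ (a - 1) * Real.exp (-l * D) / Real.Gamma a = g * l ^ (1 - a) := by
    rw [show -l * D = -1 by linarith, hg, hl, one_div, Real.inv_rpow hDp.le, ← Real.rpow_neg hDp.le, neg_sub]
    ring
  rw [hJ] at hmn
  set X := ∫ α in Ioc (-(1/2):ℝ) (1/2), Theta A b N l α with hX
  set Y := ∫ α in Ioc (-(1/2):ℝ) (1/2), M α with hY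
  set Q := l ^ (1 - a) with hQ
  have hQp : 0 < Q := by positivity
  have hQD : D ^ (a - 1) = Q := by
    rw [hQ, hl, one_div, Real.inv_rpow hDp.le, ← Real.rpow_neg hDp.le, neg_sub]
  have h1 : g * Q - π * (W : ℝ) ^ (-(1 / 2) : ℝ) * Q ≤ ‖Y‖ := by
    have h := norm_sub_norm_le ((g * Q : ℝ) : ℂ) Y
    rw [Complex.norm_real, Real.norm_of_nonneg (by positivity), norm_sub_rev] at h
    linarith
  have h2 : Pi0 * ‖Y‖ - ‖X‖ ≤ ‖X - Pi0 * Y‖ := by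
    have h := norm_sub_norm_le (Pi0 * Y : ℂ) X
    rw [norm_mul, Complex.norm_real, Real.norm_of_nonneg hPi0p.le, norm_sub_rev] at h
    exact h
  have h3 : Pi0 * g / 4 * Q ≤ ‖X‖ := by
    have h4 := h2.trans (hdiff.trans (mul_le_mul_of_nonneg_left hcs (by positivity)))
    have h5 := mul_le_mul_of_nonneg_left h1 hPi0p.le
    have e1 : 3 * π * Q * (Pi0 * (g / 4 / (3 * π)) + C1 * (W : ℝ) ^ (-(1 / 2) : ℝ) * Z + C1 * (Pi0 * g / 8 / (3 * π * C1)) + eps l * Z)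
      = Q * (Pi0 * g / 4 + 3 * π * C1 * Z * (W : ℝ) ^ (-(1 / 2) : ℝ) + Pi0 * g / 8 + 3 * π * Z * eps l) := by
      field_simp
    rw [e1] at h4
    have h6 : Q * (Pi0 * g / 4 + 3 * π * C1 * Z * (W : ℝ) ^ (-(1 / 2) : ℝ) + Pi0 * g / 8 + 3 * π * Z * eps l) ≤
      Q * (Pi0 * g * 3 / 4 - Pi0 * π * (W : ℝ) ^ (-(1 / 2) : ℝ)) := by
      refine mul_le_mul_of_nonneg_left ?_ hQp.le
      linarith
    linarith
  rw [hQD]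
  have h7 := h3.trans hTint
  rw [Real.exp_neg] at h7
  have hE := Real.exp_pos 1
  calc Pi0 * g / 4 * Real.exp 1 * Q = Real.exp 1 * (Pi0 * g / 4 * Q) := by ring
    _ ≤ Real.exp 1 * ((Real.exp 1)⁻¹ * (sol A b N).ncard) := by gcongr
    _ = _ := by field_simp

end CM


namespace CM
open Set

lemma aeval_scale {σ S : Type*} [CommRing S] (F : MvPolynomial σ ℤ) (n : ℕ) (hF : F.IsHomogeneous n) (c : S) (v : σ → S) :
    aeval (fun i => c * v i) F = c ^ n * aeval v F := by
  rw [aeval_def, aeval_def, eval₂_eq, eval₂_eq, Finset.mul_sum]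
  refine Finset.sum_congr rfl fun d hd => ?_
  simp_rw [mul_pow]
  rw [Finset.prod_mul_distrib, Finset.prod_pow_eq_pow_sum, ← hF.degree_eq_sum_deg_support hd]
  ring

lemma deg_split {σ : Type*} (d : σ →₀ ℕ) (n : ℕ) (h : d.degree = n + 1) :
    ∃ i d', d = Finsupp.single i 1 + d' ∧ d'.degree = n := by
  classical
  have hd : d ≠ 0 := by rintro rfl; simp at h
  obtain ⟨i, hi⟩ := Finsupp.ne_iff.1 hd
  have hle : Finsupp.single i 1 ≤ d := by
    rw [Finsupp.single_le_iff]
    exact Nat.one_le_iff_ne_zero.2 (by simpa using hi)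
  refine ⟨i, d - Finsupp.single i 1, (add_tsub_cancel_of_le hle).symm, ?_⟩
  have h2 := congrArg Finsupp.degree (add_tsub_cancel_of_le hle)
  rw [map_add, Finsupp.degree_single] at h2
  omega

lemma quad_rep {r : ℕ} (F : MvPolynomial (Fin r) ℤ) (hF : F.IsHomogeneous 2) :
    ∃ Q : QuadraticForm ℚ (Fin r → ℚ), ∀ v, Q v = aeval v F := by
  have hd : ∀ d ∈ F.support, ∃ i j : Fin r, d = Finsupp.single i 1 + Finsupp.single j 1 := by
    intro d hd
    have h2 : d.degree = 1 + 1 := by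
      by_contra hne
      exact (mem_support_iff.1 hd) (hF.coeff_eq_zero hne)
    obtain ⟨i, d1, rfl, h3⟩ := deg_split d 1 h2
    obtain ⟨j, d2, rfl, h4⟩ := deg_split d1 0 h3
    rw [Finsupp.degree_eq_zero_iff] at h4
    exact ⟨i, j, by rw [h4, add_zero]⟩
  have h2 : ∀ d : Fin r →₀ ℕ, ∃ Q : QuadraticForm ℚ (Fin r → ℚ), d ∈ F.support → ∀ v, Q v = aeval v (monomial d (coeff d F)) := by
    intro d
    by_cases hdm : d ∈ F.support
    · obtain ⟨i, j, hij⟩ := hd d hdm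
      refine ⟨((coeff d F : ℤ) : ℚ) • QuadraticMap.linMulLin (LinearMap.proj i) (LinearMap.proj j), fun _ v => ?_⟩
      rw [aeval_monomial, _root_.smul_apply, QuadraticMap.linMulLin_apply, hij,
        Finsupp.prod_add_index' (by simp) (by intros; rw [pow_add])]
      simp
    · exact ⟨0, fun h => absurd h hdm⟩
  choose Q hQ using h2
  refine ⟨∑ d ∈ F.support, Q d, fun v => ?_⟩
  conv_rhs => rw [F.as_sum, map_sum]
  rw [_root_.sum_apply]
  exact Finset.sum_congr rfl fun d hd => hQ d hd v

lemma aeval_cast {σ S : Type*} [CommRing S] (F : MvPolynomial σ ℤ) (v : σ → ℤ) :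
    aeval (fun i => (v i : S)) F = ((eval v F : ℤ) : S) := by
  have := MvPolynomial.aeval_algebraMap_apply S v F
  simpa [Function.comp_def, MvPolynomial.aeval_eq_eval] using this

lemma diag {r : ℕ} (F : MvPolynomial (Fin r) ℤ) (hF : F.IsHomogeneous 2)
    (hpos : ∀ v : Fin r → ℤ, v ≠ 0 → 0 < eval v F) :
    ∃ (M : Matrix (Fin r) (Fin r) ℤ) (a : Fin r → ℕ), M.det ≠ 0 ∧ (∀ i, 0 < a i) ∧
      ∀ u : Fin r → ℤ, eval (M.mulVec u) F = ∑ i, (a i : ℤ) * u i ^ 2 := by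
  classical
  obtain ⟨Q, hQ⟩ := quad_rep F hF
  obtain ⟨w, ⟨φ⟩⟩ := QuadraticForm.equivalent_weightedSumSquares Q
  have hfr := Module.finrank_fin_fun ℚ (n := r)
  generalize Module.finrank ℚ (Fin r → ℚ) = r' at *
  subst hfr
  set ψ : (Fin r' → ℚ) →ₗ[ℚ] (Fin r' → ℚ) := φ.symm.toLinearEquiv.toLinearMap with hψ
  have hψQ : ∀ u, aeval (ψ u) F = ∑ i, w i * (u i) ^ 2 := by
    intro u
    rw [← hQ]
    have h := φ.symm.map_app u
    rw [QuadraticMap.weightedSumSquares_apply] at h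
    simp only [smul_eq_mul, ← sq] at h
    exact h
  have hψinj : ∀ u, ψ u = 0 → u = 0 := by
    intro u hu
    exact (LinearEquiv.map_eq_zero_iff φ.symm.toLinearEquiv).1 hu
  set M0 := LinearMap.toMatrix' ψ with hM0
  obtain ⟨d, hd⟩ := IsLocalization.exist_integer_multiples_of_finite (nonZeroDivisors ℤ) (fun p : Fin r' × Fin r' => M0 p.1 p.2)
  have hd' : ∀ i j, ∃ z : ℤ, (z : ℚ) = (d : ℤ) * M0 i j := by
    intro i j
    obtain ⟨z, hz⟩ := hd (i, j)
    exact ⟨z, by simpa using hz⟩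
  choose M hM using hd'
  have hd0 : ((d : ℤ) : ℚ) ≠ 0 := by
    exact_mod_cast nonZeroDivisors.ne_zero d.2
  have hMv : ∀ u : Fin r' → ℤ, (fun i => (((Matrix.of M).mulVec u i : ℤ) : ℚ)) = fun i => ((d:ℤ):ℚ) * ψ (fun i => (u i : ℚ)) i := by
    intro u
    ext i
    rw [← LinearMap.toMatrix'_mulVec, ← hM0]
    simp only [Matrix.mulVec, dotProduct, Matrix.of_apply]
    push_cast
    rw [Finset.mul_sum]
    refine Finset.sum_congr rfl fun j _ => ?_
    rw [hM]; ring
  have hMinj : ∀ u : Fin r' → ℤ, (Matrix.of M).mulVec u = 0 → u = 0 := by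
    intro u hu
    have h1 := hMv u
    rw [hu] at h1
    have h2 : ψ (fun i => (u i : ℚ)) = 0 := by
      ext i
      have := congrFun h1 i
      simp only [Pi.zero_apply, Int.cast_zero] at this
      simpa [hd0] using this.symm
    have h3 := hψinj _ h2
    ext i
    have := congrFun h3 i
    simp only [Pi.zero_apply] at this ⊢
    exact_mod_cast this
  have hFM : ∀ u : Fin r' → ℤ, ((eval ((Matrix.of M).mulVec u) F : ℤ) : ℚ) = ∑ i, (((d:ℤ):ℚ) ^ 2 * w i) * (u i : ℚ) ^ 2 := by
    intro u
    rw [← aeval_cast, hMv, aeval_scale F 2 hF, hψQ, Finset.mul_sum]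
    refine Finset.sum_congr rfl fun i _ => by ring
  have ha : ∀ i, ∃ a : ℕ, 0 < a ∧ (a : ℚ) = ((d:ℤ):ℚ) ^ 2 * w i := by
    intro i
    have hne : (Pi.single i 1 : Fin r' → ℤ) ≠ 0 := by simp
    have hp := hpos ((Matrix.of M).mulVec (Pi.single i 1)) (fun h => hne (hMinj _ h))
    have hf := hFM (Pi.single i 1)
    rw [Finset.sum_eq_single i (by intro j _ hj; simp [hj]) (by simp)] at hf
    refine ⟨(eval ((Matrix.of M).mulVec (Pi.single i 1)) F).toNat, by omega, ?_⟩
    rw [Pi.single_eq_same, Int.cast_one, one_pow, mul_one] at hf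
    rw [← hf]
    have := Int.toNat_of_nonneg hp.le
    exact_mod_cast this
  choose a ha1 ha2 using ha
  refine ⟨Matrix.of M, a, ?_, ha1, fun u => ?_⟩
  · intro h0
    obtain ⟨v, hv, hv2⟩ := Matrix.exists_mulVec_eq_zero_iff.2 h0
    exact hv (hMinj v hv2)
  · have := hFM u
    simp_rw [← ha2] at this
    exact_mod_cast this

lemma not_dvd_eval {h : ℕ} (i : Fin h) (q : MvPolynomial (Fin h) ℤ) (hq : ¬ X i ∣ q) :
    ∃ v : Fin h → ℤ, v i = 0 ∧ eval v q ≠ 0 := by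
  classical
  by_contra hcon
  push Not at hcon
  apply hq
  set g : Fin h → MvPolynomial (Fin h) ℤ := fun j => if j = i then 0 else X j with hg
  have h0 : aeval g q = 0 := by
    apply MvPolynomial.funext
    intro x
    rw [map_zero]
    have h1 := hcon (fun j => if j = i then 0 else x j) (by simp)
    rw [← h1]
    have : (eval x).comp (aeval g).toRingHom = eval (fun j => if j = i then 0 else x j) := by
      apply MvPolynomial.ringHom_ext
      · intro r; simp
      · intro j
        simp only [hg, RingHom.comp_apply, AlgHom.toRingHom_eq_coe, RingHom.coe_coe, aeval_X, eval_X]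
        split_ifs <;> simp
    exact congrArg (fun f => f q) this
  rw [← Ideal.mem_span_singleton, ← Ideal.Quotient.eq_zero_iff_mem]
  have : (Ideal.Quotient.mk (Ideal.span {(X i : MvPolynomial (Fin h) ℤ)})).comp (aeval g).toRingHom =
      Ideal.Quotient.mk (Ideal.span {(X i : MvPolynomial (Fin h) ℤ)}) := by
    apply MvPolynomial.ringHom_ext
    · intro r; simp
    · intro j
      simp only [hg, RingHom.comp_apply, AlgHom.toRingHom_eq_coe, RingHom.coe_coe, aeval_X]
      split_ifs with hj
      · rw [hj, map_zero, eq_comm, Ideal.Quotient.eq_zero_iff_mem]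
        exact Ideal.mem_span_singleton_self _
      · rfl
  rw [← this]
  change Ideal.Quotient.mk _ (aeval g q) = 0
  rw [h0, map_zero]

end CM


namespace CM
open Set

lemma eval_dvd {σ : Type*} (n : ℤ) (x y : σ → ℤ) (hxy : ∀ i, n ∣ x i - y i) (q : MvPolynomial σ ℤ) :
    n ∣ eval x q - eval y q := by
  induction q using MvPolynomial.induction_on with
  | C a => simp
  | add p q hp hq =>
    rw [map_add, map_add, show eval x p + eval x q - (eval y p + eval y q) = (eval x p - eval y p) + (eval x q - eval y q) by ring]
    exact dvd_add hp hq
  | mul_X p i hp =>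
    rw [map_mul, map_mul, eval_X, eval_X, show eval x p * x i - eval y p * y i = (eval x p - eval y p) * x i + eval y p * (x i - y i) by ring]
    exact dvd_add (hp.mul_right _) ((hxy i).mul_left _)

lemma AP (v n : ℤ) (hn : 0 < n) (c X : ℝ) (hX : (n : ℝ) ≤ X) :
    ∃ Zf : Finset ℤ, (∀ y ∈ Zf, n ∣ y - v ∧ |(y : ℝ) - c| ≤ X) ∧ X / n ≤ Zf.card := by
  have hn' : (0:ℝ) < n := by exact_mod_cast hn
  refine ⟨(Finset.Icc ⌈(c - X - v) / n⌉ ⌊(c + X - v) / n⌋).image (fun z => v + n * z), ?_, ?_⟩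
  · intro y hy
    obtain ⟨z, hz, rfl⟩ := Finset.mem_image.1 hy
    rw [Finset.mem_Icc, Int.ceil_le, Int.le_floor, div_le_iff₀ hn', le_div_iff₀ hn'] at hz
    refine ⟨⟨z, by ring⟩, ?_⟩
    push_cast
    rw [abs_le]
    constructor <;> linarith [hz.1, hz.2]
  · rw [Finset.card_image_of_injective _ (by
      intro z w hzw
      simp only [add_right_inj] at hzw
      exact mul_left_cancel₀ hn.ne' hzw), Int.card_Icc]
    have h1 := Int.ceil_lt_add_one ((c - X - v) / (n:ℝ))
    have h2 := Int.lt_floor_add_one ((c + X - v) / (n:ℝ))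
    have h3 : ((⌊(c + X - v) / (n:ℝ)⌋ + 1 - ⌈(c - X - v) / (n:ℝ)⌉ : ℤ) : ℝ) ≤ ((⌊(c + X - v) / (n:ℝ)⌋ + 1 - ⌈(c - X - v) / (n:ℝ)⌉).toNat : ℝ) := by
      exact_mod_cast Int.self_le_toNat _
    refine le_trans ?_ h3
    push_cast
    have h4 : (c + X - v) / (n:ℝ) - (c - X - v) / n = X / n + X / n := by field_simp; ring
    have h5 : 1 ≤ X / n := by rw [le_div_iff₀ hn']; linarith
    linarith

lemma poly_bd {h : ℕ} {κ : Type*} [Fintype κ] (v : Fin h → ℝ) (p : κ → MvPolynomial (Fin h) ℤ) :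
    ∃ K : ℝ, 1 ≤ K ∧ ∀ y : Fin h → ℝ, (∀ i, |y i - v i| ≤ 1) → ∀ k, |aeval y (p k)| ≤ K := by
  have h1 : ∀ k, ∃ K : ℝ, 0 ≤ K ∧ ∀ y : Fin h → ℝ, (∀ i, |y i - v i| ≤ 1) → |aeval y (p k)| ≤ K := by
    intro k
    have hc : Continuous fun y : Fin h → ℝ => |aeval y (p k)| := by
      have : Continuous fun y : Fin h → ℝ => aeval y (p k) := by
        simp_rw [aeval_def, eval₂_eq]; fun_prop
      exact this.abs
    obtain ⟨K, hK⟩ := ((isCompact_closedBall v 1).image hc).bddAbove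
    refine ⟨max K 0, le_max_right _ _, fun y hy => le_max_of_le_left (hK ⟨y, ?_, rfl⟩)⟩
    rw [mem_closedBall_iff_norm, pi_norm_le_iff_of_nonneg zero_le_one]
    intro i
    exact hy i
  choose K hK0 hK using h1
  refine ⟨1 + ∑ k, K k, ?_, fun y hy k => (hK k y hy).trans ?_⟩
  · have := Finset.sum_nonneg fun k (_ : k ∈ Finset.univ) => hK0 k
    linarith
  · have := Finset.single_le_sum (fun k _ => hK0 k) (Finset.mem_univ k)
    linarith

lemma poly_near {h : ℕ} (v : Fin h → ℝ) (p : MvPolynomial (Fin h) ℤ) (ε : ℝ) (hε : 0 < ε) :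
    ∃ δ : ℝ, 0 < δ ∧ δ ≤ 1 ∧ ∀ y : Fin h → ℝ, (∀ i, |y i - v i| ≤ δ) → |aeval y p - aeval v p| ≤ ε := by
  have hc : Continuous fun y : Fin h → ℝ => aeval y p := by
    simp_rw [aeval_def, eval₂_eq]; fun_prop
  obtain ⟨δ, hδ, h⟩ := Metric.continuous_iff.1 hc v ε hε
  refine ⟨min (δ / 2) 1, by positivity, min_le_right _ _, fun y hy => ?_⟩
  refine (h y ?_).le
  rw [dist_eq_norm]
  refine lt_of_le_of_lt ((pi_norm_le_iff_of_nonneg (r := δ / 2) (by positivity)).2 fun i => ?_) (by linarith)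
  exact (hy i).trans (min_le_left _ _)

lemma pi_count {κ : Type*} [Fintype κ] [DecidableEq κ] (p : κ → Prop) [DecidablePred p] (S : κ → Finset ℤ) (X : ℝ) (hX : 0 ≤ X)
    (h1 : ∀ i, p i → 1 ≤ (S i).card) (h2 : ∀ i, ¬ p i → X ≤ (S i).card) :
    X ^ (Finset.univ.filter fun i => ¬ p i).card ≤ (Fintype.piFinset S).card := by
  rw [Fintype.card_piFinset]
  push_cast
  calc X ^ (Finset.univ.filter fun i => ¬ p i).card = ∏ i, (if p i then 1 else X) := by
        rw [Finset.prod_ite]; simp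
    _ ≤ _ := by
      refine Finset.prod_le_prod (fun i _ => by split_ifs <;> positivity) fun i _ => ?_
      split_ifs with h
      · exact_mod_cast h1 i h
      · exact h2 i h

lemma Icc_count (X : ℝ) (hX : 0 ≤ X) : X ≤ (Finset.Icc (-⌊X⌋) ⌊X⌋).card := by
  rw [Int.card_Icc]
  have h0 : 0 ≤ ⌊X⌋ := Int.floor_nonneg.2 hX
  have h0' : (0:ℝ) ≤ ⌊X⌋ := by exact_mod_cast h0
  have h2 := Int.lt_floor_add_one X
  have h3 : ((⌊X⌋ + 1 - -⌊X⌋ : ℤ) : ℝ) ≤ ((⌊X⌋ + 1 - -⌊X⌋).toNat : ℝ) := by exact_mod_cast Int.self_le_toNat _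
  push_cast at h3
  linarith

lemma mem_Icc_abs (X : ℝ) (t : ℤ) (ht : t ∈ Finset.Icc (-⌊X⌋) ⌊X⌋) : |(t:ℝ)| ≤ X := by
  rw [Finset.mem_Icc] at ht
  have h1 : (t:ℝ) ≤ ⌊X⌋ := by exact_mod_cast ht.2
  have h2 : -(⌊X⌋:ℝ) ≤ t := by exact_mod_cast ht.1
  have h3 := Int.floor_le X
  rw [abs_le]; constructor <;> linarith

/-- extension by zero -/
def ext {r m : ℕ} (s : Fin r → ℤ) (j : Fin m) : ℤ := if hj : (j:ℕ) < r then s ⟨j, hj⟩ else 0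

lemma ext_castLE {r m : ℕ} (hrm : r ≤ m) (s : Fin r → ℤ) (i : Fin r) : ext s (Fin.castLE hrm i) = s i := by
  unfold ext
  simp

lemma ext_sum {r m : ℕ} (hrm : r ≤ m) (s : Fin r → ℤ) (g : Fin m → ℤ) :
    ∑ j, ext s j * g j = ∑ i, s i * g (Fin.castLE hrm i) := by
  obtain ⟨k, rfl⟩ := Nat.exists_eq_add_of_le hrm
  rw [Fin.sum_univ_add]
  have h2 : ∑ i : Fin k, ext s (Fin.natAdd r i) * g (Fin.natAdd r i) = 0 := by
    refine Finset.sum_eq_zero fun i _ => ?_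
    unfold ext; simp
  rw [h2, add_zero]
  refine Finset.sum_congr rfl fun i _ => ?_
  have : Fin.castAdd k i = Fin.castLE hrm i := rfl
  rw [this, ext_castLE]

lemma card_ge (r m : ℕ) (hrm : r ≤ m) : (Finset.univ.filter fun j : Fin m => ¬ (j:ℕ) < r).card = m - r := by
  obtain ⟨k, rfl⟩ := Nat.exists_eq_add_of_le hrm
  rw [Finset.card_filter, Fin.sum_univ_add]
  simp

lemma eval_scale {σ : Type*} (F : MvPolynomial σ ℤ) (n : ℕ) (hF : F.IsHomogeneous n) (c : ℤ) (v : σ → ℤ) :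
    eval (fun i => c * v i) F = c ^ n * eval v F := by
  have := aeval_scale F n hF c v
  simpa [MvPolynomial.aeval_eq_eval] using this

/-- the algebraic identity -/
lemma equation {h m r : ℕ} (hrm : r ≤ m) (o : Fin h) (F : MvPolynomial (Fin r) ℤ) (q : Fin m → MvPolynomial (Fin h) ℤ)
    (hq : ∀ j, (q j).IsHomogeneous 2) (R : MvPolynomial (Fin h) ℤ) (hR : R.IsHomogeneous 3)
    (M : Matrix (Fin r) (Fin r) ℤ) (a : Fin r → ℕ) (hM : ∀ u : Fin r → ℤ, eval (M.mulVec u) F = ∑ i, (a i : ℤ) * u i ^ 2)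
    (e : ℤ) (L : ℕ) (A : Fin r → ℕ) (sg : Fin r → ℤ) (hA : ∀ i, (A i : ℤ) = L * (a i * sg i ^ 2))
    (yh : Fin h → ℤ) (hyo : yh o = e ^ 2 * L) (b : Fin r → ℤ)
    (hb : ∀ i, sg i * (∑ j, M j i * eval yh (q (Fin.castLE hrm j))) = e * b i)
    (t : Fin m → ℤ) (ht : ∀ j : Fin m, (j:ℕ) < r → t j = 0) (u : Fin r → ℤ)
    (hu : u ∈ sol A b (∑ j, t j * eval yh (q j) + eval yh R)) :
    (e * yh o) * eval (fun i : Fin r => (ext (M.mulVec fun i => sg i * u i) (Fin.castLE hrm i) + e * t (Fin.castLE hrm i))) F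
      + ∑ j, (ext (M.mulVec fun i => sg i * u i) j + e * t j) * eval (fun i => e * yh i) (q j) + eval (fun i => e * yh i) R = 0 := by
  have hu' : ∑ i, (A i * u i ^ 2 + b i * u i) + (∑ j, t j * eval yh (q j) + eval yh R) = 0 := hu
  have h1 : (fun i : Fin r => (ext (M.mulVec fun i => sg i * u i) (Fin.castLE hrm i) + e * t (Fin.castLE hrm i))) =
      M.mulVec fun i => sg i * u i := by
    ext i
    rw [ext_castLE, ht _ (by simp), mul_zero, add_zero]
  rw [h1, hM, hyo, eval_scale R 3 hR]
  simp_rw [eval_scale (q _) 2 (hq _)]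
  have h2 : ∑ j, (ext (M.mulVec fun i => sg i * u i) j + e * t j) * (e ^ 2 * eval yh (q j)) =
      e ^ 2 * ∑ j, ext (M.mulVec fun i => sg i * u i) j * eval yh (q j) + e ^ 3 * ∑ j, t j * eval yh (q j) := by
    rw [Finset.mul_sum, Finset.mul_sum, ← Finset.sum_add_distrib]
    refine Finset.sum_congr rfl fun j _ => by ring
  have h3 : ∑ j, ext (M.mulVec fun i => sg i * u i) j * eval yh (q j) = e * ∑ i, b i * u i := by
    rw [ext_sum hrm]
    simp only [Matrix.mulVec, dotProduct]
    simp_rw [Finset.sum_mul]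
    rw [Finset.sum_comm, Finset.mul_sum]
    refine Finset.sum_congr rfl fun i _ => ?_
    have := hb i
    rw [← mul_assoc, ← this, Finset.mul_sum, Finset.sum_mul]
    refine Finset.sum_congr rfl fun j _ => by ring
  have h4 : (L:ℤ) * ∑ i, (a i : ℤ) * (sg i * u i) ^ 2 = ∑ i, A i * u i ^ 2 := by
    rw [Finset.mul_sum]
    refine Finset.sum_congr rfl fun i _ => ?_
    rw [hA]; ring
  rw [h2, h3]
  rw [Finset.sum_add_distrib] at hu'
  linear_combination e ^ 3 * hu' + e ^ 3 * h4

end CM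


namespace CM
open Set

lemma est {r : ℕ} (A : Fin r → ℕ) (hA : ∀ i, 0 < A i) (i0 : Fin r) (b : Fin r → ℤ) (N : ℤ) (K T : ℝ)
    (hb : ∀ i, |(b i : ℝ)| ≤ K * T ^ 2) (hb0 : T ^ 2 / 2 ≤ |(b i0 : ℝ)|)
    (hN : |(N : ℝ)| ≤ T ^ 4 / (32 * A i0)) :
    T ^ 4 / (32 * A i0) ≤ Del A b N ∧ ∀ u ∈ sol A b N, ∀ i, |(u i : ℝ)| ≤ (r * K ^ 2 + 1 + K) * T ^ 2 := by
  have hA' : ∀ i, (1:ℝ) ≤ A i := fun i => by exact_mod_cast hA i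
  have hT2 : 0 ≤ T ^ 2 := sq_nonneg T
  have hA0 := hA' i0
  obtain ⟨hN1, hN2⟩ := abs_le.1 hN
  have h1 : T ^ 4 / (16 * A i0) ≤ ∑ i, ((b i : ℝ) ^ 2 / (4 * A i)) := by
    refine le_trans ?_ (Finset.single_le_sum (f := fun i => (b i : ℝ) ^ 2 / (4 * A i)) (fun i _ => ?_) (Finset.mem_univ i0))
    · have : (T ^ 2 / 2) ^ 2 ≤ (b i0 : ℝ) ^ 2 := by
        rw [← sq_abs (b i0 : ℝ)]; gcongr
      calc T ^ 4 / (16 * A i0) = (T ^ 2 / 2) ^ 2 / (4 * A i0) := by field_simp; ring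
        _ ≤ _ := by gcongr
    · have := hA' i; positivity
  have hbs : ∀ i, (b i : ℝ) ^ 2 ≤ K ^ 2 * T ^ 4 := by
    intro i
    calc (b i : ℝ) ^ 2 = |(b i : ℝ)| ^ 2 := (sq_abs _).symm
      _ ≤ (K * T ^ 2) ^ 2 := by have := hb i; gcongr
      _ = _ := by ring
  have hNs : T ^ 4 / (32 * A i0) ≤ T ^ 4 := div_le_self (by positivity) (by linarith)
  have h2 : Del A b N ≤ (r * K ^ 2 + 1) * T ^ 4 := by
    unfold Del
    have : ∑ i, ((b i : ℝ) ^ 2 / (4 * A i)) ≤ ∑ _i : Fin r, K ^ 2 * T ^ 4 := by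
      refine Finset.sum_le_sum fun i _ => ?_
      have := hA' i
      exact (div_le_self (sq_nonneg _) (by linarith)).trans (hbs i)
    rw [Finset.sum_const, Finset.card_univ, Fintype.card_fin, nsmul_eq_mul] at this
    linarith
  constructor
  · unfold Del
    have : T ^ 4 / (16 * A i0) = T ^ 4 / (32 * A i0) + T ^ 4 / (32 * A i0) := by field_simp; ring
    linarith
  · intro u hu i
    have h3 := (sol_bound A hA b N u hu i).trans h2
    have hk : 0 ≤ (r:ℝ) * K ^ 2 := by positivity
    have h4 : ((u i : ℝ) + b i / (2 * A i)) ^ 2 ≤ ((r * K ^ 2 + 1) * T ^ 2) ^ 2 := by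
      refine h3.trans ?_
      have : (r * K ^ 2 + 1) * T ^ 4 ≤ (r * K ^ 2 + 1) ^ 2 * T ^ 4 := by
        gcongr
        nlinarith only [hk]
      linarith
    have h5 := abs_le_of_sq_le_sq h4 (by positivity)
    have h6 : |(b i : ℝ) / (2 * A i)| ≤ K * T ^ 2 := by
      rw [abs_div, abs_of_pos (by have := hA' i; positivity : (0:ℝ) < 2 * A i)]
      exact (div_le_self (abs_nonneg _) (by have := hA' i; linarith)).trans (hb i)
    calc |(u i : ℝ)| = |((u i : ℝ) + b i / (2 * A i)) - b i / (2 * A i)| := by congr 1; ring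
      _ ≤ |(u i : ℝ) + b i / (2 * A i)| + |(b i : ℝ) / (2 * A i)| := abs_sub _ _
      _ ≤ _ := by linarith

lemma box_finite {m h : ℕ} (B : ℝ) (p : (Fin m → ℤ) × (Fin h → ℤ) → Prop) :
    {x : (Fin m → ℤ) × (Fin h → ℤ) | (∀ j, (|x.1 j| : ℝ) ≤ B) ∧ (∀ i, (|x.2 i| : ℝ) ≤ B) ∧ p x}.Finite := by
  have hf : ∀ k : ℕ, (Set.pi Set.univ fun _ : Fin k => Set.Icc (-⌈B⌉) ⌈B⌉).Finite := fun k =>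
    Set.Finite.pi fun _ => Set.finite_Icc _ _
  have hz : ∀ z : ℤ, (|z| : ℝ) ≤ B → z ∈ Set.Icc (-⌈B⌉) ⌈B⌉ := by
    intro z hz
    have h1 := hz.trans (Int.le_ceil B)
    rw [abs_le] at h1
    exact ⟨by exact_mod_cast h1.1, by exact_mod_cast h1.2⟩
  refine ((hf m).prod (hf h)).subset ?_
  rintro x ⟨h1, h2, -⟩
  exact ⟨fun j _ => hz _ (by exact_mod_cast h1 j), fun j _ => hz _ (by exact_mod_cast h2 j)⟩

/-- scaling of a homogeneous polynomial -/
lemma scale_eval {h : ℕ} (p : MvPolynomial (Fin h) ℤ) (n : ℕ) (hp : p.IsHomogeneous n) (T : ℝ) (hT : T ≠ 0) (y : Fin h → ℤ) :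
    ((eval y p : ℤ) : ℝ) = T ^ n * aeval (fun i => (y i : ℝ) / T) p := by
  rw [← aeval_scale p n hp, ← aeval_cast]
  congr 2
  ext i
  field_simp

end CM


namespace CM
open Set

set_option maxHeartbeats 2000000 in
theorem core (h m r : ℕ) (hh : 0 < h) (hr5 : 5 ≤ r) (hrm : r ≤ m) (F : MvPolynomial (Fin r) ℤ) (hF2 : F.IsHomogeneous 2)
    (hFpos : ∀ v : Fin r → ℤ, v ≠ 0 → 0 < eval v F) (q : Fin m → MvPolynomial (Fin h) ℤ) (hq : ∀ j, (q j).IsHomogeneous 2)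
    (R : MvPolynomial (Fin h) ℤ) (hR : R.IsHomogeneous 3)
    (hndvd : ∃ i : Fin r, ¬ (X ⟨0, hh⟩ ∣ q (Fin.castLE hrm i))) :
    ∃ c > (0:ℝ), ∃ K > (0:ℝ), ∃ T0 : ℝ, ∀ T : ℝ, T0 ≤ T →
      c * (T ^ (h - 1) * (T ^ 2) ^ (m - r) * (T ^ 4) ^ ((r:ℝ) / 2 - 1)) ≤
      (Set.ncard {p : (Fin m → ℤ) × (Fin h → ℤ) | (∀ j, (|p.1 j| : ℝ) ≤ K * T ^ 2) ∧ (∀ i, (|p.2 i| : ℝ) ≤ K * T ^ 2) ∧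
        p.2 ⟨0, hh⟩ * eval (fun i : Fin r => p.1 (Fin.castLE hrm i)) F + ∑ j, p.1 j * eval p.2 (q j) + eval p.2 R = 0} : ℝ) := by
  classical
  set o : Fin h := ⟨0, hh⟩ with ho
  obtain ⟨P, hCT⟩ := CT r hr5
  obtain ⟨M, a, hdet, ha, hM⟩ := diag F hF2 hFpos
  obtain ⟨i1, hi1⟩ := hndvd
  obtain ⟨v, hv0, hv⟩ := not_dvd_eval o _ hi1
  have hex : ∃ i0, ∑ j, eval v (q (Fin.castLE hrm j)) * M j i0 ≠ 0 := by
    by_contra hcon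
    push Not at hcon
    apply hdet
    refine Matrix.exists_vecMul_eq_zero_iff.1 ⟨fun j => eval v (q (Fin.castLE hrm j)), fun h0 => hv (congrFun h0 i1), ?_⟩
    ext i
    exact hcon i
  obtain ⟨i0, hi0⟩ := hex
  set qt : Fin r → MvPolynomial (Fin h) ℤ := fun i => ∑ j, C (M j i) * q (Fin.castLE hrm j) with hqt
  have hqtev : ∀ (i : Fin r) (y : Fin h → ℤ), eval y (qt i) = ∑ j, M j i * eval y (q (Fin.castLE hrm j)) := by
    intro i y
    rw [hqt]; simp
  have hqth : ∀ i, (qt i).IsHomogeneous 2 := by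
    intro i
    exact MvPolynomial.IsHomogeneous.sum _ _ _ fun j _ => (hq _).C_mul _
  set e : ℤ := eval v (qt i0) with he
  have he0 : e ≠ 0 := by
    rw [he, hqtev]
    intro h0
    apply hi0
    rw [← h0]
    exact Finset.sum_congr rfl fun j _ => mul_comm _ _
  have he1 : 1 ≤ |e| := Int.one_le_abs he0
  have hepos : (1:ℝ) ≤ |(e:ℝ)| := by exact_mod_cast he1
  set sg : Fin r → ℤ := fun i => if i = i0 then 1 else e with hsg
  have hsg0 : ∀ i, sg i ≠ 0 := by
    intro i; rw [hsg]; simp only; split_ifs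
    · exact one_ne_zero
    · exact he0
  set s : Fin r → ℕ := fun i => a i * (sg i).natAbs ^ 2 with hs
  have hspos : ∀ i, 0 < s i := fun i => Nat.mul_pos (ha i) (pow_pos (Int.natAbs_pos.2 (hsg0 i)) 2)
  set L : ℕ := 2 * P.factorial * ∏ i, s i with hL
  have hLpos : 0 < L := by
    have := Nat.factorial_pos P
    have := Finset.prod_pos fun i (_ : i ∈ Finset.univ) => hspos i
    positivity
  set A : Fin r → ℕ := fun i => L * s i with hA
  have hApos : ∀ i, 0 < A i := fun i => Nat.mul_pos hLpos (hspos i)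
  have hAz : ∀ i, (A i : ℤ) = L * (a i * sg i ^ 2) := by
    intro i
    rw [hA, hs]; simp only; push_cast
    rw [sq_abs]
  have hsL : ∀ i, s i ∣ L := fun i => Dvd.dvd.mul_left (Finset.dvd_prod_of_mem s (Finset.mem_univ i)) _
  have hprime : ∀ p : ℕ, p.Prime → (p ≤ P ∨ p ∣ 2 * ∏ i, A i) → p ∣ A i0 := by
    intro p hp hor
    refine Dvd.dvd.mul_right ?_ _
    rcases hor with h1 | h1
    · rw [hL]
      exact Dvd.dvd.mul_right (Dvd.dvd.mul_left ((hp.dvd_factorial).2 h1) _) _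
    · rcases (hp.dvd_mul).1 h1 with h2 | h2
      · exact h2.trans (Dvd.intro _ (by rw [hL, mul_assoc]))
      · obtain ⟨i, _, h3⟩ := (hp.prime.dvd_finsetProd_iff _).1 h2
        rcases (hp.dvd_mul).1 h3 with h4 | h4
        · exact h4
        · exact h4.trans (hsL i)
  obtain ⟨c1, hc1, D0, hmain⟩ := hCT A hApos i0 hprime
  -- real bounds
  set vr : Fin h → ℝ := fun i => (v i : ℝ) with hvr
  obtain ⟨K1, hK1, hK1b⟩ := poly_bd vr qt
  obtain ⟨K2, hK2, hK2b⟩ := poly_bd vr q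
  obtain ⟨K3, hK3, hK3b⟩ := poly_bd vr (fun _ : Unit => R)
  obtain ⟨δ, hδ0, hδ1, hδ⟩ := poly_near vr (qt i0) (|(e:ℝ)| / 2) (by positivity)
  have hvrq : aeval vr (qt i0) = (e : ℝ) := by rw [hvr, aeval_cast]
  rw [hvrq] at hδ
  have hm1 : (1:ℝ) ≤ m := by exact_mod_cast (by omega : 1 ≤ m)
  have hA1 : (1:ℝ) ≤ A i0 := by exact_mod_cast hApos i0
  set n1 : ℤ := |e| * L with hn1
  have hn1pos : 0 < n1 := by
    have : (0:ℤ) < L := by exact_mod_cast hLpos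
    positivity
  have hn1r : (0:ℝ) < n1 := by exact_mod_cast hn1pos
  set ε : ℝ := 1 / (64 * A i0 * m * K2) with hε
  have hε0 : 0 < ε := by positivity
  have hε1 : ε ≤ 1 := by
    rw [hε, div_le_one (by positivity)]
    have h1 : (1:ℝ) ≤ A i0 * m := one_le_mul_of_one_le_of_one_le hA1 hm1
    have h2 : (1:ℝ) ≤ A i0 * m * K2 := one_le_mul_of_one_le_of_one_le h1 hK2
    linarith
  set V : ℝ := ∑ i, |(v i : ℝ)| with hV
  have hVn : 0 ≤ V := Finset.sum_nonneg fun _ _ => abs_nonneg _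
  have hVi : ∀ i, |(v i : ℝ)| ≤ V := fun i => Finset.single_le_sum (f := fun i => |(v i : ℝ)|) (fun _ _ => abs_nonneg _) (Finset.mem_univ i)
  set Ku : ℝ := r * K1 ^ 2 + 1 + K1 with hKu
  have hKu0 : 0 ≤ Ku := by positivity
  set Ms : ℝ := ∑ i, ∑ j, |(M i j : ℝ)| * |(sg j : ℝ)| with hMs
  have hMs0 : 0 ≤ Ms := Finset.sum_nonneg fun _ _ => Finset.sum_nonneg fun _ _ => by positivity
  set K : ℝ := Ms * Ku + |(e:ℝ)| + |(e:ℝ)| * (V + 1) with hK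
  have hK0 : 0 < K := by positivity
  refine ⟨c1 * (δ / n1) ^ (h - 1) * ε ^ (m - r) * (1 / (32 * A i0)) ^ ((r:ℝ) / 2 - 1), by positivity, K, hK0,
    1 + (e ^ 2 * L + n1) / δ + 64 * A i0 * K3 + 32 * A i0 * |D0|, fun T hT => ?_⟩
  have hp1 : 0 ≤ ((e:ℝ) ^ 2 * L + n1) / δ := by positivity
  have hp2 : 0 ≤ 64 * A i0 * K3 := by positivity
  have hp3 : 0 ≤ 32 * A i0 * |D0| := by positivity
  have hT1 : 1 ≤ T := by linarith
  have hTpos : 0 < T := by linarith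
  have hTa : (e:ℝ) ^ 2 * L + n1 ≤ δ * T := by
    rw [← div_le_iff₀' hδ0]; linarith
  have hTb : 64 * A i0 * K3 ≤ T := by linarith
  have hTc : 32 * A i0 * |D0| ≤ T := by linarith
  have hT24 : T ^ 4 = T ^ 2 * T ^ 2 := by ring
  have hTT2 : T ≤ T ^ 2 := le_self_pow₀ hT1 (by norm_num)
  have hTT4 : T ≤ T ^ 4 := le_self_pow₀ hT1 (by norm_num)
  -- the y's
  have hAP := fun i => AP (v i) n1 hn1pos (T * v i) (δ * T) (by
    have : (0:ℝ) ≤ (e:ℝ) ^ 2 * L := by positivity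
    linarith)
  choose Zf hZ1 hZ2 using hAP
  set Y : Finset (Fin h → ℤ) := Fintype.piFinset (fun i => if i = o then {e ^ 2 * (L:ℤ)} else Zf i) with hY
  have hYcard : (δ * T / n1) ^ (h - 1) ≤ (Y.card : ℝ) := by
    have := pi_count (fun i : Fin h => i = o) (fun i => if i = o then {e ^ 2 * (L:ℤ)} else Zf i) (δ * T / n1) (by positivity)
      (fun i hi => by rw [if_pos hi]; simp) (fun i hi => by rw [if_neg hi]; exact hZ2 i)
    rwa [Finset.filter_ne', Finset.card_erase_of_mem (Finset.mem_univ _), Finset.card_univ, Fintype.card_fin] at this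
  have hYo : ∀ y ∈ Y, y o = e ^ 2 * L := by
    intro y hy
    have := Fintype.mem_piFinset.1 hy o
    simpa using this
  have hYi : ∀ y ∈ Y, ∀ i, n1 ∣ y i - v i ∧ |(y i : ℝ) - T * v i| ≤ δ * T := by
    intro y hy i
    by_cases hio : i = o
    · rw [hio, hYo y hy, hv0]
      constructor
      · rw [sub_zero, ← sq_abs e, hn1]
        exact ⟨|e|, by ring⟩
      · push_cast
        rw [mul_zero, sub_zero, abs_of_nonneg (by positivity)]
        linarith
    · have := Fintype.mem_piFinset.1 hy i
      rw [if_neg hio] at this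
      exact hZ1 i _ this
  -- the t's
  set Ts : Finset (Fin m → ℤ) := Fintype.piFinset (fun j : Fin m => if (j:ℕ) < r then {0} else Finset.Icc (-⌊ε * T ^ 2⌋) ⌊ε * T ^ 2⌋) with hTs
  have hTcard : (ε * T ^ 2) ^ (m - r) ≤ (Ts.card : ℝ) := by
    have := pi_count (fun j : Fin m => (j:ℕ) < r) (fun j : Fin m => if (j:ℕ) < r then {0} else Finset.Icc (-⌊ε * T ^ 2⌋) ⌊ε * T ^ 2⌋) (ε * T ^ 2) (by positivity)
      (fun i hi => by rw [if_pos hi]; simp) (fun i hi => by rw [if_neg hi]; exact Icc_count _ (by positivity))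
    rwa [card_ge r m hrm] at this
  have hTz : ∀ t ∈ Ts, ∀ j : Fin m, (j:ℕ) < r → t j = 0 := by
    intro t ht j hj
    have := Fintype.mem_piFinset.1 ht j
    rw [if_pos hj] at this
    simpa using this
  have hTi : ∀ t ∈ Ts, ∀ j, |(t j : ℝ)| ≤ ε * T ^ 2 := by
    intro t ht j
    by_cases hj : (j:ℕ) < r
    · rw [hTz t ht j hj]; simp; positivity
    · have := Fintype.mem_piFinset.1 ht j
      rw [if_neg hj] at this
      exact mem_Icc_abs _ _ this
  -- the coefficients
  set bb : (Fin h → ℤ) → Fin r → ℤ := fun y i => if i = i0 then eval y (qt i0) / e else eval y (qt i) with hbb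
  set NN : (Fin h → ℤ) → (Fin m → ℤ) → ℤ := fun y t => ∑ j, t j * eval y (q j) + eval y R with hNN
  have hb0 : ∀ y ∈ Y, ∃ k : ℤ, bb y i0 = 1 + L * k ∧ eval y (qt i0) = e * bb y i0 := by
    intro y hy
    obtain ⟨k, hk⟩ := eval_dvd (e * L) y v (fun i => by
      have h1 := (hYi y hy i).1
      rw [hn1] at h1
      rcases abs_choice e with h2 | h2
      · rwa [h2] at h1
      · rw [h2, neg_mul, neg_dvd] at h1; exact h1) (qt i0)
    rw [← he] at hk
    have h3 : eval y (qt i0) = e * (1 + L * k) := by linear_combination hk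
    have h4 : bb y i0 = 1 + L * k := by
      rw [hbb]; simp only [if_true]
      rw [h3, Int.mul_ediv_cancel_left _ he0]
    exact ⟨k, h4, by rw [h4, h3]⟩
  have hcop : ∀ y ∈ Y, IsCoprime (bb y i0) (A i0 : ℤ) := by
    intro y hy
    obtain ⟨k, hk, _⟩ := hb0 y hy
    have h1 : IsCoprime (bb y i0) (L : ℤ) := by
      rw [hk]; exact ⟨1, -k, by ring⟩
    have h2 : (A i0 : ℤ) = L * s i0 := by rw [hA]; push_cast; rfl
    rw [h2]
    exact h1.mul_right (h1.of_isCoprime_of_dvd_right (Int.natCast_dvd_natCast.2 (hsL i0)))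
  have hsgb : ∀ y ∈ Y, ∀ i, sg i * (∑ j, M j i * eval y (q (Fin.castLE hrm j))) = e * bb y i := by
    intro y hy i
    rw [← hqtev]
    by_cases hi : i = i0
    · obtain ⟨k, _, h2⟩ := hb0 y hy
      rw [hi, ← h2, hsg]; simp
    · rw [hsg, hbb]; simp [hi]
  -- sizes
  have hyT : ∀ y ∈ Y, ∀ i, |(y i : ℝ) / T - vr i| ≤ δ := by
    intro y hy i
    have h1 := (hYi y hy i).2
    rw [show (y i : ℝ) / T - vr i = ((y i : ℝ) - T * v i) / T by rw [hvr]; field_simp, abs_div, abs_of_pos hTpos,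
      div_le_iff₀ hTpos]
    exact h1
  have hyT1 : ∀ y ∈ Y, ∀ i, |(y i : ℝ) / T - vr i| ≤ 1 := fun y hy i => (hyT y hy i).trans hδ1
  have hqts : ∀ y ∈ Y, ∀ i, |((eval y (qt i) : ℤ) : ℝ)| ≤ K1 * T ^ 2 := by
    intro y hy i
    rw [scale_eval _ 2 (hqth i) T hTpos.ne', abs_mul, abs_of_pos (by positivity), mul_comm]
    gcongr
    exact hK1b _ (hyT1 y hy) i
  have hqs : ∀ y ∈ Y, ∀ j, |((eval y (q j) : ℤ) : ℝ)| ≤ K2 * T ^ 2 := by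
    intro y hy i
    rw [scale_eval _ 2 (hq i) T hTpos.ne', abs_mul, abs_of_pos (by positivity), mul_comm]
    gcongr
    exact hK2b _ (hyT1 y hy) i
  have hRs : ∀ y ∈ Y, |((eval y R : ℤ) : ℝ)| ≤ K3 * T ^ 3 := by
    intro y hy
    rw [scale_eval _ 3 hR T hTpos.ne', abs_mul, abs_of_pos (by positivity), mul_comm]
    gcongr
    exact hK3b _ (hyT1 y hy) ()
  have hbs : ∀ y ∈ Y, ∀ i, |(bb y i : ℝ)| ≤ K1 * T ^ 2 := by
    intro y hy i
    by_cases hi : i = i0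
    · obtain ⟨k, _, h2⟩ := hb0 y hy
      have h3 := hqts y hy i0
      rw [h2] at h3
      push_cast at h3
      rw [abs_mul] at h3
      rw [hi]
      refine le_trans ?_ h3
      exact le_mul_of_one_le_left (abs_nonneg _) hepos
    · have h3 := hqts y hy i
      rw [hbb]; simp only [if_neg hi]; exact h3
  have hb0s : ∀ y ∈ Y, T ^ 2 / 2 ≤ |(bb y i0 : ℝ)| := by
    intro y hy
    obtain ⟨k, _, h2⟩ := hb0 y hy
    have h3 := hδ _ (hyT y hy)
    have h4 := scale_eval _ 2 (hqth i0) T hTpos.ne' y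
    rw [h2] at h4
    push_cast at h4
    set z := aeval (fun i => (y i : ℝ) / T) (qt i0) with hz
    have h5 : |(e:ℝ)| / 2 ≤ |z| := by
      have h6 := abs_sub_abs_le_abs_sub (e:ℝ) z
      rw [abs_sub_comm] at h6
      linarith
    have h7 : |(e:ℝ)| * |(bb y i0 : ℝ)| = T ^ 2 * |z| := by
      rw [← abs_mul, h4, abs_mul, abs_of_pos (by positivity : 0 < T ^ 2)]
    have h8 : |(e:ℝ)| * (T ^ 2 / 2) ≤ |(e:ℝ)| * |(bb y i0 : ℝ)| := by
      rw [h7]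
      calc |(e:ℝ)| * (T ^ 2 / 2) = T ^ 2 * (|(e:ℝ)| / 2) := by ring
        _ ≤ _ := by gcongr
    exact le_of_mul_le_mul_left h8 (by linarith)
  have hNs : ∀ y ∈ Y, ∀ t ∈ Ts, |(NN y t : ℝ)| ≤ T ^ 4 / (32 * A i0) := by
    intro y hy t ht
    have h1 : |((∑ j, t j * eval y (q j) : ℤ) : ℝ)| ≤ T ^ 4 / (64 * A i0) := by
      push_cast
      refine (Finset.abs_sum_le_sum_abs _ _).trans ?_
      calc ∑ j, |(t j : ℝ) * ((eval y (q j) : ℤ) : ℝ)| ≤ ∑ _j : Fin m, (ε * T ^ 2) * (K2 * T ^ 2) := by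
            refine Finset.sum_le_sum fun j _ => ?_
            rw [abs_mul]
            exact mul_le_mul (hTi t ht j) (hqs y hy j) (abs_nonneg _) (by positivity)
        _ = T ^ 4 / (64 * A i0) := by
            rw [Finset.sum_const, Finset.card_univ, Fintype.card_fin, nsmul_eq_mul, hε]
            field_simp
    have h2 : |((eval y R : ℤ) : ℝ)| ≤ T ^ 4 / (64 * A i0) := by
      refine (hRs y hy).trans ?_
      rw [le_div_iff₀ (by positivity)]
      calc K3 * T ^ 3 * (64 * A i0) = (64 * A i0 * K3) * T ^ 3 := by ring
        _ ≤ T * T ^ 3 := by gcongr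
        _ = T ^ 4 := by ring
    rw [hNN]; simp only
    rw [Int.cast_add]
    refine (abs_add_le _ _).trans ((add_le_add h1 h2).trans (le_of_eq ?_))
    field_simp; ring
  have hest := fun y (hy : y ∈ Y) t (ht : t ∈ Ts) => est A hApos i0 (bb y) (NN y t) K1 T (hbs y hy) (hb0s y hy) (hNs y hy t ht)
  have hcount : ∀ y ∈ Y, ∀ t ∈ Ts, c1 * (T ^ 4 / (32 * A i0)) ^ ((r:ℝ) / 2 - 1) ≤ ((sol A (bb y) (NN y t)).ncard : ℝ) := by
    intro y hy t ht
    have h1 := (hest y hy t ht).1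
    have hr5' : (5:ℝ) ≤ r := by exact_mod_cast hr5
    refine le_trans ?_ (hmain (bb y) (NN y t) (hcop y hy) (le_trans ?_ h1))
    · gcongr
      linarith
    · rw [le_div_iff₀ (by positivity)]
      have := le_abs_self D0
      calc D0 * (32 * A i0) ≤ |D0| * (32 * A i0) := by gcongr
        _ ≤ T := by linarith
        _ ≤ T ^ 4 := hTT4
  -- counting
  set Sf : Finset (Σ _ : (Fin h → ℤ) × (Fin m → ℤ), Fin r → ℤ) :=
    (Y ×ˢ Ts).sigma (fun p => (sol_finite A hApos (bb p.1) (NN p.1 p.2)).toFinset) with hSf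
  have hSfcard : (Y.card : ℝ) * Ts.card * (c1 * (T ^ 4 / (32 * A i0)) ^ ((r:ℝ) / 2 - 1)) ≤ (Sf.card : ℝ) := by
    rw [hSf, Finset.card_sigma]
    push_cast
    calc _ = ∑ _p ∈ Y ×ˢ Ts, (c1 * (T ^ 4 / (32 * A i0)) ^ ((r:ℝ) / 2 - 1)) := by
          rw [Finset.sum_const, Finset.card_product, nsmul_eq_mul]; push_cast; ring
      _ ≤ _ := by
        refine Finset.sum_le_sum fun p hp => ?_
        rw [Finset.mem_product] at hp
        have := hcount p.1 hp.1 p.2 hp.2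
        rwa [Set.ncard_eq_toFinset_card _ (sol_finite A hApos _ _)] at this
  set f : (Σ _ : (Fin h → ℤ) × (Fin m → ℤ), Fin r → ℤ) → (Fin m → ℤ) × (Fin h → ℤ) := fun p =>
    (fun j => ext (M.mulVec fun i => sg i * p.2 i) j + e * p.1.2 j, fun i => e * p.1.1 i) with hf
  have hmem : ∀ p ∈ Sf, p.1.1 ∈ Y ∧ p.1.2 ∈ Ts ∧ p.2 ∈ sol A (bb p.1.1) (NN p.1.1 p.1.2) := by
    intro p hp
    rw [hSf, Finset.mem_sigma, Finset.mem_product, Set.Finite.mem_toFinset] at hp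
    exact ⟨hp.1.1, hp.1.2, hp.2⟩
  have hfin := box_finite (m := m) (h := h) (K * T ^ 2) (fun p => p.2 o * eval (fun i : Fin r => p.1 (Fin.castLE hrm i)) F + ∑ j, p.1 j * eval p.2 (q j) + eval p.2 R = 0)
  have hle : Sf.card ≤ Set.ncard {p : (Fin m → ℤ) × (Fin h → ℤ) | (∀ j, (|p.1 j| : ℝ) ≤ K * T ^ 2) ∧ (∀ i, (|p.2 i| : ℝ) ≤ K * T ^ 2) ∧
        p.2 o * eval (fun i : Fin r => p.1 (Fin.castLE hrm i)) F + ∑ j, p.1 j * eval p.2 (q j) + eval p.2 R = 0} := by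
    rw [← Set.ncard_coe_finset]
    refine Set.ncard_le_ncard_of_injOn f ?_ ?_ hfin
    · intro p hp
      obtain ⟨hy, ht, hu⟩ := hmem p hp
      refine ⟨fun j => ?_, fun i => ?_, ?_⟩
      · rw [hf]; simp only
        push_cast
        refine (abs_add_le _ _).trans ?_
        have h1 : |((ext (M.mulVec fun i => sg i * p.2 i) j : ℤ) : ℝ)| ≤ Ms * Ku * T ^ 2 := by
          unfold ext
          split_ifs with hj
          · simp only [Matrix.mulVec, dotProduct]
            push_cast
            refine (Finset.abs_sum_le_sum_abs _ _).trans ?_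
            calc ∑ k, |(M ⟨j, hj⟩ k : ℝ) * ((sg k : ℝ) * (p.2 k : ℝ))| ≤ ∑ k, |(M ⟨j, hj⟩ k : ℝ)| * |(sg k : ℝ)| * (Ku * T ^ 2) := by
                  refine Finset.sum_le_sum fun k _ => ?_
                  rw [abs_mul, abs_mul, ← mul_assoc]
                  gcongr
                  exact (hest _ hy _ ht).2 _ hu k
              _ = (∑ k, |(M ⟨j, hj⟩ k : ℝ)| * |(sg k : ℝ)|) * (Ku * T ^ 2) := by rw [Finset.sum_mul]
              _ ≤ Ms * (Ku * T ^ 2) := by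
                  gcongr
                  exact Finset.single_le_sum (f := fun i => ∑ k, |(M i k : ℝ)| * |(sg k : ℝ)|)
                    (fun i _ => Finset.sum_nonneg fun _ _ => by positivity) (Finset.mem_univ _)
              _ = _ := by ring
          · simp; positivity
        have h2 : |(e:ℝ) * (p.1.2 j : ℝ)| ≤ |(e:ℝ)| * T ^ 2 := by
          rw [abs_mul]
          gcongr
          refine (hTi _ ht j).trans ?_
          calc ε * T ^ 2 ≤ 1 * T ^ 2 := by gcongr
            _ = T ^ 2 := one_mul _
        have h3 : 0 ≤ |(e:ℝ)| * (V + 1) * T ^ 2 := by positivity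
        rw [hK]
        linarith
      · rw [hf]; simp only
        push_cast
        rw [abs_mul]
        have h1 : |(p.1.1 i : ℝ)| ≤ (V + 1) * T ^ 2 := by
          have h2 := (hYi _ hy i).2
          have h3 : |(p.1.1 i : ℝ)| ≤ |(p.1.1 i : ℝ) - T * v i| + |T * v i| := by
            have := abs_add_le ((p.1.1 i : ℝ) - T * v i) (T * v i)
            rwa [sub_add_cancel] at this
          rw [abs_mul, abs_of_pos hTpos] at h3
          have h4 : T * |(v i : ℝ)| ≤ T * V := by have := hVi i; gcongr
          have h5 : δ * T ≤ 1 * T := by gcongr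
          have h6 : (V + 1) * T ≤ (V + 1) * T ^ 2 := by gcongr
          linarith
        have h7 : |(e:ℝ)| * |(p.1.1 i : ℝ)| ≤ |(e:ℝ)| * ((V + 1) * T ^ 2) := by gcongr
        have h8 : 0 ≤ Ms * Ku * T ^ 2 := by positivity
        have h9 : 0 ≤ |(e:ℝ)| * T ^ 2 := by positivity
        rw [hK]
        linarith
      · exact equation hrm o F q hq R hR M a hM e L A sg hAz p.1.1 (hYo _ hy) (bb p.1.1) (hsgb _ hy) p.1.2 (hTz _ ht) p.2 hu
    · rintro ⟨⟨y, t⟩, u⟩ hp ⟨⟨y', t'⟩, u'⟩ hp' heq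
      obtain ⟨_, ht, _⟩ := hmem _ hp
      obtain ⟨_, ht', _⟩ := hmem _ hp'
      simp only at ht ht'
      rw [hf] at heq
      simp only [Prod.mk.injEq] at heq
      obtain ⟨hx, hy⟩ := heq
      have hyy : y = y' := by
        ext i
        exact mul_left_cancel₀ he0 (congrFun hy i)
      have htt : t = t' := by
        ext j
        by_cases hj : (j:ℕ) < r
        · rw [hTz t ht j hj, hTz t' ht' j hj]
        · have := congrFun hx j
          unfold ext at this
          simp only [dif_neg hj, zero_add] at this
          exact mul_left_cancel₀ he0 this
      have huu : u = u' := by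
        have h1 : M.mulVec (fun i => sg i * u i) = M.mulVec (fun i => sg i * u' i) := by
          ext i
          have := congrFun hx (Fin.castLE hrm i)
          simp only [htt, add_left_inj] at this
          rwa [ext_castLE, ext_castLE] at this
        have h2 : M.mulVec ((fun i => sg i * u i) - (fun i => sg i * u' i)) = 0 := by
          rw [Matrix.mulVec_sub, h1, sub_self]
        have h3 := Matrix.eq_zero_of_mulVec_eq_zero hdet h2
        ext i
        have h4 := congrFun h3 i
        simp only [Pi.sub_apply, Pi.zero_apply] at h4
        exact mul_left_cancel₀ (hsg0 i) (sub_eq_zero.1 h4)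
      rw [hyy, htt, huu]
  have hle' : (Sf.card : ℝ) ≤ _ := Nat.cast_le.2 hle
  refine le_trans ?_ hle'
  refine le_trans ?_ hSfcard
  calc _ = (δ * T / n1) ^ (h - 1) * (ε * T ^ 2) ^ (m - r) * (c1 * (T ^ 4 / (32 * A i0)) ^ ((r:ℝ) / 2 - 1)) := by
        rw [show T ^ 4 / (32 * (A i0 : ℝ)) = T ^ 4 * (1 / (32 * A i0)) by ring, Real.mul_rpow (by positivity) (by positivity),
          show δ * T / n1 = (δ / n1) * T by ring, mul_pow, mul_pow]
        ring
    _ ≤ _ := by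
        refine mul_le_mul_of_nonneg_right ?_ (by positivity)
        exact mul_le_mul hYcard hTcard (by positivity) (Nat.cast_nonneg _)

end CM



/-- For `C(x,y) = y₁·F(x₁,…,x_r) + Σ x_j q_j(y) + R(y)` with `F` positive
definite of rank `5 ≤ r ≤ m` and `y₁ ∤ q_i` for some `1 ≤ i ≤ r`, one has
`N(B) ≫ B^{n-h-2+(h-1)/2}`. -/
theorem stmt1 (n h m r : ℕ) (hh : 0 < h) (hhn : h < n) (hm : m = n - h)
    (hr5 : 5 ≤ r) (hrm : r ≤ m)
    (F : MvPolynomial (Fin r) ℤ) (hF2 : F.IsHomogeneous 2)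
    (hFpos : ∀ v : Fin r → ℝ, v ≠ 0 → 0 < aeval v F)
    (q : Fin m → MvPolynomial (Fin h) ℤ) (hq : ∀ j, (q j).IsHomogeneous 2)
    (R : MvPolynomial (Fin h) ℤ) (hR : R.IsHomogeneous 3)
    (hndvd : ∃ i : Fin r, ¬ ((X ⟨0, hh⟩ : MvPolynomial (Fin h) ℤ) ∣ q (Fin.castLE hrm i))) :
    ∃ c > (0 : ℝ), ∃ B₀ : ℝ, ∀ B : ℝ, B₀ ≤ B →
      c * B ^ ((n : ℝ) - h - 2 + ((h : ℝ) - 1) / 2) ≤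
        (Set.ncard {p : (Fin m → ℤ) × (Fin h → ℤ) |
          (∀ j, (|p.1 j| : ℝ) ≤ B) ∧ (∀ i, (|p.2 i| : ℝ) ≤ B) ∧
          p.2 ⟨0, hh⟩ * eval (fun i : Fin r => p.1 (Fin.castLE hrm i)) F
            + ∑ j, p.1 j * eval p.2 (q j) + eval p.2 R = 0} : ℝ) := by
  have hpos : ∀ v : Fin r → ℤ, v ≠ 0 → 0 < eval v F := by
    intro v hv
    have h1 := hFpos (fun i => (v i : ℝ)) (fun h0 => hv (funext fun i => by
      have := congrFun h0 i
      simpa using this))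
    rw [CM.aeval_cast] at h1
    exact_mod_cast h1
  obtain ⟨c, hc, K, hK, T0, hT⟩ := CM.core h m r hh hr5 hrm F hF2 hpos q hq R hR hndvd
  set E : ℝ := (n:ℝ) - h - 2 + ((h:ℝ) - 1) / 2 with hE
  refine ⟨c * (1 / K) ^ E, by positivity, K * (max T0 1) ^ 2, fun B hB => ?_⟩
  have hM1 : 1 ≤ max T0 1 := le_max_right _ _
  have hBK : (max T0 1) ^ 2 ≤ B / K := by
    rw [le_div_iff₀ hK]; linarith
  have hBpos : 0 < B := lt_of_lt_of_le (by positivity) hB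
  have hTm : max T0 1 ≤ √(B / K) := Real.le_sqrt_of_sq_le hBK
  have hsq : √(B / K) ^ 2 = B / K := Real.sq_sqrt (by positivity)
  have hKT : K * √(B / K) ^ 2 = B := by
    rw [hsq]; field_simp
  have key := hT (√(B / K)) ((le_max_left _ _).trans hTm)
  rw [hKT] at key
  refine le_trans (le_of_eq ?_) key
  have hXpos : 0 < √(B / K) := by linarith
  set x := √(B / K) with hx
  have e1 : x ^ (h - 1) * (x ^ 2) ^ (m - r) * (x ^ 4) ^ ((r:ℝ) / 2 - 1) = (x ^ 2) ^ E := by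
    have hmn : (m:ℝ) = (n:ℝ) - h := by rw [hm, Nat.cast_sub hhn.le]
    rw [← pow_mul, ← Real.rpow_natCast x (h - 1), ← Real.rpow_natCast x (2 * (m - r)), ← Real.rpow_natCast x 4,
      ← Real.rpow_natCast x 2, ← Real.rpow_mul hXpos.le, ← Real.rpow_mul hXpos.le, ← Real.rpow_add hXpos, ← Real.rpow_add hXpos]
    congr 1
    push_cast [Nat.cast_sub hrm, Nat.cast_sub (show 1 ≤ h from hh)]
    rw [hE, hmn]
    ring
  rw [e1, hsq, div_eq_mul_one_div B K, Real.mul_rpow hBpos.le (by positivity)]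
  ring
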